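/- arXiv:math/0501243 — 3 statements merged into one kernel-verified Lean document; each statement's English description precedes it below -/
import Mathlib

section
/- Let E be a field and L a finite extension of E which is the compositum of intermediate extensions L₁ and L₂ of relatively prime degrees over E. Then the quotient group E*/N(L/E) is isomorphic to the direct product (E*/N(L₁/E)) × (E*/N(L₂/E)). -/
/-- The norm group `N(L/E)`: the image of the norm map `L* → E*`, as a subgroup of `Eˣ`. -/
noncomputable def normGroup (E L : Type*) [Field E] [Field L] [Algebra E L] : Subgroup Eˣ :=
  (Units.map (Algebra.norm E : L →* E)).range

/-!
Write `nᵢ = [Lᵢ : E]`. Coprimality makes `L₁` and `L₂` linearly disjoint, so `[L : L₁] = n₂` and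
`[L : L₂] = n₁`. An element `a` of `N(L₁/E) ∩ N(L₂/E)` then has both `a ^ n₂` and `a ^ n₁` in
`N(L/E)`, hence lies in it by Bézout; likewise every `a : Eˣ` has `a ^ nᵢ ∈ N(Lᵢ/E)`, so the two
norm groups generate `Eˣ`. The Chinese remainder theorem for groups concludes.
-/

section Group

variable {G : Type*} [Group G]

theorem mem_of_pow_mem_of_coprime {H : Subgroup G} {m n : ℕ} (hmn : m.Coprime n) {a : G}
    (hm : a ^ m ∈ H) (hn : a ^ n ∈ H) : a ∈ H := by
  obtain ⟨u, v, huv⟩ := Nat.isCoprime_iff_coprime.2 hmn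
  have bezout : a = (a ^ m) ^ u * (a ^ n) ^ v := by
    rw [← zpow_natCast, ← zpow_natCast, ← zpow_mul, ← zpow_mul, ← zpow_add, mul_comm (m : ℤ),
      mul_comm (n : ℤ), huv, zpow_one]
  rw [bezout]
  exact mul_mem (zpow_mem hm u) (zpow_mem hn v)

variable {H K : Subgroup G} [H.Normal] [K.Normal]

theorem prod_mk'_surjective_of_sup_eq_top (hHK : H ⊔ K = ⊤) :
    Function.Surjective ((QuotientGroup.mk' H).prod (QuotientGroup.mk' K)) := by
  rintro ⟨⟨a⟩, ⟨b⟩⟩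
  obtain ⟨u, hu, v, hv, huv⟩ : ∃ u ∈ H, ∃ v ∈ K, u * v = a⁻¹ * b :=
    Subgroup.mem_sup_of_normal_left.1 (hHK ▸ Subgroup.mem_top (a⁻¹ * b))
  have hb : a * u * v = b := by rw [mul_assoc, huv, mul_inv_cancel_left]
  refine ⟨a * u, Prod.ext ?_ ?_⟩
  · exact QuotientGroup.mk_mul_of_mem a hu
  · exact (QuotientGroup.mk_mul_of_mem (a * u) hv).symm.trans (congrArg QuotientGroup.mk hb)

/-- The **Chinese remainder theorem** for two normal subgroups that generate the group. -/
noncomputable def quotientInfMulEquivProd (hHK : H ⊔ K = ⊤) : G ⧸ (H ⊓ K) ≃* (G ⧸ H) × (G ⧸ K) :=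
  (QuotientGroup.quotientMulEquivOfEq (by
    rw [MonoidHom.ker_prod, QuotientGroup.ker_mk', QuotientGroup.ker_mk'])).trans
    (QuotientGroup.quotientKerEquivOfSurjective _ (prod_mk'_surjective_of_sup_eq_top hHK))

end Group

section NormGroup

variable {E : Type*} [Field E]

theorem pow_finrank_mem_normGroup (K : Type*) [Field K] [Algebra E K] (a : Eˣ) :
    a ^ Module.finrank E K ∈ normGroup E K :=
  ⟨Units.map (algebraMap E K : E →* K) a, Units.ext (Algebra.norm_algebraMap (a : E))⟩

theorem normGroup_sup_eq_top_of_coprime {K₁ K₂ : Type*} [Field K₁] [Algebra E K₁] [Field K₂]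
    [Algebra E K₂] (hcop : (Module.finrank E K₁).Coprime (Module.finrank E K₂)) :
    normGroup E K₁ ⊔ normGroup E K₂ = ⊤ :=
  (Subgroup.eq_top_iff' _).2 fun a ↦ mem_of_pow_mem_of_coprime hcop
    (Subgroup.mem_sup_left (pow_finrank_mem_normGroup K₁ a))
    (Subgroup.mem_sup_right (pow_finrank_mem_normGroup K₂ a))

section Tower

variable (K L : Type*) [Field K] [Algebra E K] [Field L] [Algebra E L] [Algebra K L]
  [IsScalarTower E K L]

theorem normGroup_le_of_tower : normGroup E L ≤ normGroup E K := by
  rintro _ ⟨x, rfl⟩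
  exact ⟨Units.map (Algebra.norm K : L →* K) x, Units.ext Algebra.norm_norm⟩

variable {K}

theorem pow_finrank_mem_normGroup_of_tower {a : Eˣ} (ha : a ∈ normGroup E K) :
    a ^ Module.finrank K L ∈ normGroup E L := by
  obtain ⟨x, rfl⟩ := ha
  refine ⟨Units.map (algebraMap K L : K →* L) x, Units.ext ?_⟩
  calc Algebra.norm E (algebraMap K L x)
      = Algebra.norm E (Algebra.norm K (algebraMap K L x)) := Algebra.norm_norm.symm
    _ = Algebra.norm E (x : K) ^ Module.finrank K L := by rw [Algebra.norm_algebraMap, map_pow]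

end Tower

theorem normGroup_eq_inf_of_coprime {K₁ K₂ L : Type*} [Field K₁] [Algebra E K₁] [Field K₂]
    [Algebra E K₂] [Field L] [Algebra E L] [Algebra K₁ L] [Algebra K₂ L] [IsScalarTower E K₁ L]
    [IsScalarTower E K₂ L] (hcop : (Module.finrank K₁ L).Coprime (Module.finrank K₂ L)) :
    normGroup E L = normGroup E K₁ ⊓ normGroup E K₂ := by
  refine le_antisymm (le_inf (normGroup_le_of_tower K₁ L) (normGroup_le_of_tower K₂ L)) ?_
  rintro a ⟨ha₁, ha₂⟩
  exact mem_of_pow_mem_of_coprime hcop (pow_finrank_mem_normGroup_of_tower L ha₁)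
    (pow_finrank_mem_normGroup_of_tower L ha₂)

end NormGroup

theorem stmt_2 {E L : Type*} [Field E] [Field L] [Algebra E L] [FiniteDimensional E L]
    (L₁ L₂ : IntermediateField E L) (hcomp : L₁ ⊔ L₂ = ⊤)
    (hcop : Nat.Coprime (Module.finrank E L₁) (Module.finrank E L₂)) :
    Nonempty ((Eˣ ⧸ normGroup E L) ≃*
      (Eˣ ⧸ normGroup E L₁) × (Eˣ ⧸ normGroup E L₂)) := by
  have hdisj : L₁.LinearDisjoint L₂ := .of_finrank_coprime hcop
  have hcop' : (Module.finrank L₁ L).Coprime (Module.finrank L₂ L) := by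
    rw [hdisj.finrank_left_eq_finrank hcomp, hdisj.finrank_right_eq_finrank hcomp]
    exact hcop.symm
  rw [normGroup_eq_inf_of_coprime hcop']
  exact ⟨quotientInfMulEquivProd (normGroup_sup_eq_top_of_coprime hcop)⟩
end

section
/- Let G be a nontrivial finite group all of whose Sylow subgroups are cyclic, H a subgroup of G of order n, and n₁ a positive integer dividing |G| and divisible by n. Then G possesses a subgroup H₁ of order n₁ with H ⊆ H₁. -/
/-!
Let `N` be the commutator subgroup of `G`. As all Sylow subgroups of `G` are cyclic, `N` and `G ⧸ N`
are cyclic of coprime orders. By Schur–Zassenhaus `H = (H ⊓ N) ⊔ K` with `K` disjoint from `N`, and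
`K` lies in a complement `C` of `N`, which is cyclic because `C ≃* G ⧸ N`. Inside `N` choose `M`
above `H ⊓ N` of order `gcd |N| n₁`, and inside `C` choose `L` above `K` of order `gcd |C| n₁`.
Then `M` is normal in `G`, and `M ⊔ L` contains `H` and has order `gcd |G| n₁ = n₁`.
-/

section Complements

open Pointwise

variable {G : Type*} [Group G]

theorem isComplement_mul_of_isComplement_sup {A H : Subgroup G} [A.Normal] {R : Set G}
    (hR : Subgroup.IsComplement R (H ⊔ A : Subgroup G)) (hHA : Disjoint H A) :
    Subgroup.IsComplement (R * (H : Set G)) (A : Set G) := by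
  constructor
  · rintro ⟨⟨_, r, hr, h, hh, rfl⟩, a, ha⟩ ⟨⟨_, r', hr', h', hh', rfl⟩, a', ha'⟩ heq
    have hR_eq := @hR.1 (⟨r, hr⟩, ⟨h * a, Subgroup.mul_mem_sup hh ha⟩)
      (⟨r', hr'⟩, ⟨h' * a', Subgroup.mul_mem_sup hh' ha'⟩) (by simpa [mul_assoc] using heq)
    simp only [Prod.mk.injEq, Subtype.mk.injEq] at hR_eq
    obtain ⟨rfl, hmul⟩ := hR_eq
    have hHA_eq := @Subgroup.mul_injective_of_disjoint _ _ _ _ hHA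
      (⟨h, hh⟩, ⟨a, ha⟩) (⟨h', hh'⟩, ⟨a', ha'⟩) hmul
    simp only [Prod.mk.injEq, Subtype.mk.injEq] at hHA_eq
    obtain ⟨rfl, rfl⟩ := hHA_eq
    rfl
  · intro g
    obtain ⟨⟨⟨r, hr⟩, x, hx⟩, rfl⟩ := hR.2 g
    obtain ⟨h, hh, a, ha, rfl⟩ := Subgroup.mem_sup_of_normal_right.1 hx
    exact ⟨⟨⟨r * h, Set.mul_mem_mul hr hh⟩, a, ha⟩, mul_assoc r h a⟩

-- In the proof of Schur–Zassenhaus for abelian `A`, the complements are the stabilizers of classes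
-- of left transversals of `A`; a transversal of the form `R * H` is fixed by `H`.
theorem exists_isComplement'_ge_of_disjoint {A H : Subgroup G} [A.Normal] [IsMulCommutative A]
    [A.FiniteIndex] (hA : (Nat.card A).Coprime A.index) (hHA : Disjoint H A) :
    ∃ C : Subgroup G, A.IsComplement' C ∧ H ≤ C := by
  obtain ⟨R, hR, -⟩ := Subgroup.exists_isComplement_left (H ⊔ A) 1
  let T : A.LeftTransversal := ⟨R * H, isComplement_mul_of_isComplement_sup hR hHA⟩
  let α : A.QuotientDiff := Quotient.mk'' T
  refine ⟨MulAction.stabilizer G α, Subgroup.isComplement'_stabilizer_of_coprime hA, fun h hh ↦ ?_⟩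
  have hT : MulOpposite.op h⁻¹ • T = T := Subtype.ext <|
    calc MulOpposite.op h⁻¹ • (R * (H : Set G)) = R * MulOpposite.op h⁻¹ • (H : Set G) :=
        (mul_smul_comm _ _ _).symm
      _ = R * (H : Set G) := by rw [op_smul_coe_set (inv_mem hh)]
  exact congrArg Quotient.mk'' hT

theorem exists_disjoint_inf_sup_eq_of_coprime {A : Subgroup G} [A.Normal]
    (hA : (Nat.card A).Coprime A.index) (H : Subgroup G) :
    ∃ K : Subgroup G, Disjoint K A ∧ H ⊓ A ⊔ K = H := by
  have hcard : Nat.card (A.subgroupOf H) ∣ Nat.card A :=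
    Subgroup.card_comap_dvd_of_injective A H.subtype H.subtype_injective
  obtain ⟨K, hK⟩ := Subgroup.exists_right_complement'_of_coprime
    (hA.of_dvd hcard (Subgroup.relIndex_dvd_index_of_normal A H))
  refine ⟨K.map H.subtype, ?_, ?_⟩
  · rw [Subgroup.disjoint_def]
    rintro _ ⟨k, hk, rfl⟩ hkA
    exact congrArg Subtype.val (Subgroup.disjoint_def.1 hK.disjoint hkA hk)
  · rw [inf_comm, ← Subgroup.subgroupOf_map_subtype, ← Subgroup.map_sup, hK.sup_eq_top,
      ← MonoidHom.range_eq_map, H.range_subtype]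

theorem card_sup_eq_mul_of_disjoint {A K : Subgroup G} [A.Normal] (h : Disjoint A K) :
    Nat.card (A ⊔ K : Subgroup G) = Nat.card A * Nat.card K := by
  rw [← Subgroup.relIndex_bot_left, ← Subgroup.relIndex_mul_relIndex ⊥ A (A ⊔ K) bot_le le_sup_left,
    Subgroup.relIndex_bot_left, Subgroup.relIndex_sup_left, ← Subgroup.inf_relIndex_right, h.eq_bot,
    Subgroup.relIndex_bot_left]

end Complements

section Cyclic

variable {G : Type*} [Group G]

theorem characteristic_of_isCyclic [IsCyclic G] (K : Subgroup G) : K.Characteristic := by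
  refine Subgroup.characteristic_iff_le_comap.2 fun φ x hx ↦ ?_
  obtain ⟨k, hk⟩ := MonoidHom.map_cyclic φ.toMonoidHom
  rw [Subgroup.mem_comap, hk]
  exact zpow_mem hx k

theorem normal_of_le_of_isCyclic {M N : Subgroup G} [N.Normal] [IsCyclic N] (hMN : M ≤ N) :
    M.Normal := by
  have := characteristic_of_isCyclic (M.subgroupOf N)
  rw [← Subgroup.map_subgroupOf_eq_of_le hMN]
  infer_instance

theorem exists_card_eq_gcd_and_ge_of_isCyclic [Finite G] [IsCyclic G] {H : Subgroup G} {m : ℕ}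
    (hHm : Nat.card H ∣ m) :
    ∃ K : Subgroup G, Nat.card K = (Nat.card G).gcd m ∧ H ≤ K := by
  let _ : CommGroup G := IsCyclic.commGroup
  refine ⟨(powMonoidHom m : G →* G).ker, IsCyclic.card_powMonoidHom_ker G m, fun x hx ↦ ?_⟩
  exact orderOf_dvd_iff_pow_eq_one.1 ((H.orderOf_dvd_natCard hx).trans hHm)

theorem exists_card_eq_gcd_and_between_of_isCyclic {H C : Subgroup G} [Finite C] [IsCyclic C]
    (hHC : H ≤ C) {m : ℕ} (hHm : Nat.card H ∣ m) :
    ∃ K : Subgroup G, Nat.card K = (Nat.card C).gcd m ∧ H ≤ K ∧ K ≤ C := by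
  rw [← Nat.card_congr (Subgroup.subgroupOfEquivOfLe hHC).toEquiv] at hHm
  obtain ⟨K, hK, hHK⟩ := exists_card_eq_gcd_and_ge_of_isCyclic hHm
  refine ⟨K.map C.subtype, ?_, ?_, Subgroup.map_subtype_le K⟩
  · rw [Subgroup.card_map_of_injective C.subtype_injective, hK]
  · rw [← Subgroup.map_subgroupOf_eq_of_le hHC]
    exact Subgroup.map_mono hHK

end Cyclic

theorem exists_card_eq_and_ge_of_isCyclic_of_isCyclic_quotient {G : Type*} [Group G] [Finite G]
    {N : Subgroup G} [N.Normal] [IsCyclic N] [IsCyclic (G ⧸ N)]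
    (hN : (Nat.card N).Coprime N.index) {H : Subgroup G} {m : ℕ} (hHm : Nat.card H ∣ m)
    (hm : m ∣ Nat.card G) : ∃ H₁ : Subgroup G, Nat.card H₁ = m ∧ H ≤ H₁ := by
  obtain ⟨K, hKN, hHK⟩ := exists_disjoint_inf_sup_eq_of_coprime hN H
  obtain ⟨C, hC, hKC⟩ := exists_isComplement'_ge_of_disjoint hN hKN
  have : IsCyclic C := isCyclic_of_surjective _ hC.symm.QuotientMulEquiv.surjective
  have hKH : K ≤ H := hHK ▸ le_sup_right
  obtain ⟨M, hM, hHM, hMN⟩ := exists_card_eq_gcd_and_between_of_isCyclic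
    (inf_le_right : H ⊓ N ≤ N) ((Subgroup.card_dvd_of_le inf_le_left).trans hHm)
  obtain ⟨L, hL, hKL, hLC⟩ := exists_card_eq_gcd_and_between_of_isCyclic
    hKC ((Subgroup.card_dvd_of_le hKH).trans hHm)
  have : M.Normal := normal_of_le_of_isCyclic hMN
  have hNC : (Nat.card N).Coprime (Nat.card C) := hC.symm.index_eq_card ▸ hN
  refine ⟨M ⊔ L, ?_, hHK ▸ sup_le_sup hHM hKL⟩
  calc Nat.card (M ⊔ L : Subgroup G)
      = (Nat.card N).gcd m * (Nat.card C).gcd m := by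
        rw [card_sup_eq_mul_of_disjoint (hC.disjoint.mono hMN hLC), hM, hL]
    _ = (Nat.card N * Nat.card C).gcd m := (hNC.mul_gcd m).symm
    _ = m := by rw [hC.card_mul_card, Nat.gcd_eq_right hm]

theorem stmt_11 {G : Type*} [Group G] [Finite G] [Nontrivial G]
    (hcyc : ∀ (p : ℕ), p.Prime → ∀ S : Sylow p G, IsCyclic S)
    (H : Subgroup G) (n n₁ : ℕ) (hn : Nat.card H = n)
    (hn₁pos : 0 < n₁) (hn₁dvd : n₁ ∣ Nat.card G) (hndvd : n ∣ n₁) :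
    ∃ H₁ : Subgroup G, Nat.card H₁ = n₁ ∧ H ≤ H₁ := by
  have : IsZGroup G := ⟨hcyc⟩
  have : IsCyclic (commutator G) := IsZGroup.isCyclic_commutator G
  have : IsCyclic (G ⧸ commutator G) := IsZGroup.isCyclic_abelianization
  exact exists_card_eq_and_ge_of_isCyclic_of_isCyclic_quotient
    (IsZGroup.coprime_commutator_index G) (hn ▸ hndvd) hn₁dvd
end

section
/- Let E be a field, p a prime, and suppose there exists an algebraic extension F of E with Br(F)_p ≠ 0. Then there exists a finite separable extension F₁ of E and a cyclic extension F₂/F₁ of degree p such that N(F₂/F₁) ≠ F₁*. -/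
universe u

/-- `Br(F)_p = 0`, expressed as: every finite-dimensional central division algebra over `F`
of `p`-power dimension is trivial. -/
def BrauerPComponentTrivial (F : Type u) [Field F] (p : ℕ) : Prop :=
  ∀ (D : Type u) [DivisionRing D] [Algebra F D], Algebra.IsCentral F D →
    FiniteDimensional F D → (∃ k : ℕ, Module.finrank F D = p ^ k) →
      Module.finrank F D = 1

/-!
Suppose that `N(L/K) = K*` for all cyclic extensions `L/K` of degree `p` with `K/E` finite and
separable. Then, in every algebraic extension `C` of `E`, an element `c` fixed by an automorphism
`τ` of order `p` is a norm from `C` to the fixed field of `τ`. If `c` is separable over `E`, descend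
to a finite separable extension. In general some `c ^ q ^ n` is separable, with `q` the
characteristic exponent, and `q ≠ p` is settled by coprimality. If `q = p`, induct on `n`: lift `τ`
to an automorphism `T` of order `p ^ 2` of an Artin–Schreier extension `B` of `C`. By induction
`c ^ p = N_τ z` and `z = N_{T ^ p} y`, so `(∏ i < p, T ^ i y) / c` has norm `1` for `T ^ p`, and
Hilbert 90 changes `y` into an element of `C` with norm `c`.

Now let `D` be a noncommutative division algebra of `p`-power dimension over its center `M`, which
is algebraic over `E`. It has a separable element outside `M` by the Jacobson–Noether theorem, so
after an extension of `M` of degree prime to `p` it contains a cyclic extension `L` of `M` of degree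
`p`. By induction on the dimension, the centralizer `C` of `L` is a field. By Skolem–Noether,
conjugation by some `u` induces a nontrivial automorphism of `L`, and hence an automorphism `τ` of
`C` of order `p` that fixes `u ^ p ∈ C`. So `u ^ p = N_τ y`, and `v = y⁻¹ * u` satisfies
`v ^ p = 1`. This forces `v` to be central, since `M(v)` has degree both smaller than `p` and a
power of `p`. But conjugation by `v` also induces `τ ≠ 1` on `C`, a contradiction.
-/

theorem sum_range_succ_eq_sum_range {G : Type*} [AddCommGroup G] {g : ℕ → G} {n : ℕ}
    (h : g n = g 0) : ∑ i ∈ Finset.range n, g (i + 1) = ∑ i ∈ Finset.range n, g i := by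
  rw [← sub_eq_zero, ← Finset.sum_sub_distrib, Finset.sum_range_sub, h, sub_self]

section CyclicNorm

variable {R C : Type*} [CommSemiring R]

section CommSemiring

variable [CommSemiring C] [Algebra R C]

/-- The product `y * τ y * ⋯ * τ ^ (n - 1) y`. If `τ` is an automorphism of order `n` of a field,
this is the norm from that field to the fixed field of `τ`. -/
def cyclicNorm (τ : C ≃ₐ[R] C) (n : ℕ) : C →* C where
  toFun y := ∏ i ∈ Finset.range n, (τ ^ i) y
  map_one' := by simp
  map_mul' y z := by simp only [map_mul, Finset.prod_mul_distrib]

theorem cyclicNorm_apply (τ : C ≃ₐ[R] C) (n : ℕ) (y : C) :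
    cyclicNorm τ n y = ∏ i ∈ Finset.range n, (τ ^ i) y :=
  rfl

theorem cyclicNorm_zero (τ : C ≃ₐ[R] C) (y : C) : cyclicNorm τ 0 y = 1 :=
  Finset.prod_range_zero fun i ↦ (τ ^ i) y

theorem cyclicNorm_succ (τ : C ≃ₐ[R] C) (n : ℕ) (y : C) :
    cyclicNorm τ (n + 1) y = cyclicNorm τ n y * (τ ^ n) y :=
  Finset.prod_range_succ (fun i ↦ (τ ^ i) y) n

theorem cyclicNorm_succ' (τ : C ≃ₐ[R] C) (n : ℕ) (y : C) :
    cyclicNorm τ (n + 1) y = y * τ (cyclicNorm τ n y) := by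
  simp only [cyclicNorm_apply, map_prod, Finset.prod_range_succ', pow_succ', AlgEquiv.mul_apply,
    pow_zero, AlgEquiv.one_apply, mul_comm y]

theorem pow_apply_eq_of_apply_eq {τ : C ≃ₐ[R] C} {c : C} (h : τ c = c) (i : ℕ) :
    (τ ^ i) c = c := by
  rw [AlgEquiv.coe_pow, Function.iterate_fixed h]

theorem cyclicNorm_of_apply_eq {τ : C ≃ₐ[R] C} {c : C} (h : τ c = c) (n : ℕ) :
    cyclicNorm τ n c = c ^ n := by
  simp only [cyclicNorm_apply, pow_apply_eq_of_apply_eq h, Finset.prod_const, Finset.card_range]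

theorem map_pow_apply {S B : Type*} [CommSemiring S] [CommSemiring B] [Algebra S B]
    (j : C →+* B) {τ : C ≃ₐ[R] C} {T : B ≃ₐ[S] B} (h : ∀ x, j (τ x) = T (j x)) (n : ℕ) (y : C) :
    j ((τ ^ n) y) = (T ^ n) (j y) := by
  simpa only [AlgEquiv.coe_pow] using Function.Semiconj.iterate_right h n y

theorem map_cyclicNorm {S B : Type*} [CommSemiring S] [CommSemiring B] [Algebra S B]
    (j : C →+* B) {τ : C ≃ₐ[R] C} {T : B ≃ₐ[S] B} (h : ∀ x, j (τ x) = T (j x)) (n : ℕ) (y : C) :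
    j (cyclicNorm τ n y) = cyclicNorm T n (j y) := by
  simp only [cyclicNorm_apply, map_prod, map_pow_apply j h]

theorem cyclicNorm_map_zero (τ : C ≃ₐ[R] C) {n : ℕ} (hn : n ≠ 0) : cyclicNorm τ n 0 = 0 := by
  simp only [cyclicNorm_apply, map_zero]
  exact Finset.prod_eq_zero (Finset.mem_range.2 (Nat.pos_of_ne_zero hn)) rfl

theorem cyclicNorm_cyclicNorm_pow (τ : C ≃ₐ[R] C) (m n : ℕ) (y : C) :
    cyclicNorm τ m (cyclicNorm (τ ^ m) n y) = cyclicNorm (τ ^ m) n (cyclicNorm τ m y) := by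
  simp only [cyclicNorm_apply, map_prod, ← AlgEquiv.mul_apply, ← pow_mul, ← pow_add]
  rw [Finset.prod_comm]
  simp only [add_comm]

end CommSemiring

section Field

variable [Field C] [Algebra R C]

theorem exists_sum_mul_pow_apply_ne_zero {τ : C ≃ₐ[R] C} (hτ : 0 < orderOf τ) {a : ℕ → C}
    (ha : a 0 ≠ 0) : ∃ θ : C, ∑ i ∈ Finset.range (orderOf τ), a i * (τ ^ i) θ ≠ 0 := by
  by_contra! hsum
  let f (i : Fin (orderOf τ)) : C →* C := ((τ ^ (i : ℕ) : C ≃ₐ[R] C) : C →* C)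
  have hf : Function.Injective f := fun i j hij ↦
    Fin.ext <| pow_injOn_Iio_orderOf i.2 j.2 <| AlgEquiv.ext fun x ↦ DFunLike.congr_fun hij x
  have hli := Fintype.linearIndependent_iff.1 ((linearIndependent_monoidHom C C).comp f hf)
  refine ha (hli (fun i ↦ a i) (funext fun θ ↦ ?_) ⟨0, hτ⟩)
  rw [Pi.zero_apply, ← hsum θ, ← Fin.sum_univ_eq_sum_range (fun i ↦ a i * (τ ^ i) θ)]
  simp [f]

theorem exists_apply_eq_mul_of_cyclicNorm_eq_one {τ : C ≃ₐ[R] C} (hτ : 0 < orderOf τ) {z : C}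
    (hz : cyclicNorm τ (orderOf τ) z = 1) : ∃ v : C, v ≠ 0 ∧ τ v = z * v := by
  obtain ⟨θ, hθ⟩ := exists_sum_mul_pow_apply_ne_zero hτ (a := fun i ↦ cyclicNorm τ i z)
    (by simp [cyclicNorm_zero])
  set b := ∑ i ∈ Finset.range (orderOf τ), cyclicNorm τ i z * (τ ^ i) θ with hb
  have hzb : z * τ b = b := by
    simp only [hb, map_sum, map_mul, Finset.mul_sum, ← mul_assoc, ← cyclicNorm_succ',
      ← AlgEquiv.mul_apply, ← pow_succ']
    exact sum_range_succ_eq_sum_range (g := fun i ↦ cyclicNorm τ i z * (τ ^ i) θ)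
      (by simp [hz, pow_orderOf_eq_one, cyclicNorm_zero])
  refine ⟨b⁻¹, inv_ne_zero hθ, ?_⟩
  have hτb : τ b ≠ 0 := (map_ne_zero τ).2 hθ
  rw [map_inv₀, eq_mul_inv_iff_mul_eq₀ hθ, inv_mul_eq_iff_eq_mul₀ hτb, mul_comm, hzb]

theorem exists_sum_pow_apply_eq_one {τ : C ≃ₐ[R] C} (hτ : 0 < orderOf τ) :
    ∃ β : C, ∑ i ∈ Finset.range (orderOf τ), (τ ^ i) β = 1 := by
  obtain ⟨θ, hθ⟩ := exists_sum_mul_pow_apply_ne_zero hτ (a := fun _ ↦ 1) one_ne_zero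
  simp only [one_mul] at hθ
  set t := ∑ i ∈ Finset.range (orderOf τ), (τ ^ i) θ with ht
  have hτt : τ t = t := by
    simp only [ht, map_sum, ← AlgEquiv.mul_apply, ← pow_succ']
    exact sum_range_succ_eq_sum_range (g := fun i ↦ (τ ^ i) θ) (by simp [pow_orderOf_eq_one])
  refine ⟨θ / t, ?_⟩
  simp only [map_div₀, pow_apply_eq_of_apply_eq hτt]
  rw [← Finset.sum_div, ← ht, div_self hθ]

theorem exists_apply_sub_eq_of_sum_pow_apply_eq_zero {τ : C ≃ₐ[R] C} (hτ : 0 < orderOf τ) {γ : C}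
    (hγ : ∑ i ∈ Finset.range (orderOf τ), (τ ^ i) γ = 0) : ∃ α : C, τ α - α = γ := by
  obtain ⟨β, hβ⟩ := exists_sum_pow_apply_eq_one hτ
  let g (i : ℕ) : C := (∑ j ∈ Finset.range i, (τ ^ j) γ) * (τ ^ i) β
  have hτg (i : ℕ) : τ (g i) = g (i + 1) - γ * τ ((τ ^ i) β) := by
    simp only [g, map_mul, map_sum, Finset.sum_range_succ', pow_succ', AlgEquiv.mul_apply,
      pow_zero, AlgEquiv.one_apply]
    ring
  have hsum : τ (∑ i ∈ Finset.range (orderOf τ), g i)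
      = ∑ i ∈ Finset.range (orderOf τ), g i - γ := by
    rw [map_sum, Finset.sum_congr rfl fun i _ ↦ hτg i, Finset.sum_sub_distrib, ← Finset.mul_sum,
      ← map_sum, hβ, map_one, mul_one, sum_range_succ_eq_sum_range (by
      simp only [g, hγ, zero_mul, Finset.range_zero, Finset.sum_empty])]
  exact ⟨-∑ i ∈ Finset.range (orderOf τ), g i, by rw [map_neg, hsum]; ring⟩

theorem pow_apply_eq_of_apply_cyclicNorm_eq {τ : C ≃ₐ[R] C} {n : ℕ} {w : C}
    (hw : cyclicNorm τ n w ≠ 0) (h : τ (cyclicNorm τ n w) = cyclicNorm τ n w) :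
    (τ ^ n) w = w := by
  have hsucc := (cyclicNorm_succ τ n w).symm.trans (cyclicNorm_succ' τ n w)
  rw [h, mul_comm w] at hsucc
  exact mul_left_cancel₀ hw hsucc

theorem cyclicNorm_div_apply {τ : C ≃ₐ[R] C} {v : C} (hv : v ≠ 0) (n : ℕ) :
    cyclicNorm τ n (v / τ v) = v / (τ ^ n) v := by
  induction n with
  | zero => simp [cyclicNorm_zero, hv]
  | succ n ih =>
    rw [cyclicNorm_succ, ih, map_div₀, ← AlgEquiv.mul_apply, ← pow_succ,
      div_mul_div_cancel₀ ((map_ne_zero (τ ^ n)).2 hv)]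

theorem cyclicNorm_div (τ : C ≃ₐ[R] C) (n : ℕ) (x y : C) :
    cyclicNorm τ n (x / y) = cyclicNorm τ n x / cyclicNorm τ n y := by
  simp only [cyclicNorm_apply, map_div₀, Finset.prod_div_distrib]

theorem exists_cyclicNorm_eq_of_cyclicNorm_eq_pow {τ : C ≃ₐ[R] C} {n : ℕ}
    (hτ : 0 < orderOf (τ ^ n)) {c y : C} (hc : c ≠ 0) (hτc : τ c = c)
    (hy : cyclicNorm τ n (cyclicNorm (τ ^ n) (orderOf (τ ^ n)) y) = c ^ orderOf (τ ^ n)) :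
    ∃ w : C, (τ ^ n) w = w ∧ cyclicNorm τ n w = c := by
  set m := orderOf (τ ^ n)
  have hnorm : cyclicNorm (τ ^ n) m (cyclicNorm τ n y / c) = 1 := by
    rw [cyclicNorm_div, ← cyclicNorm_cyclicNorm_pow, hy,
      cyclicNorm_of_apply_eq (pow_apply_eq_of_apply_eq hτc n), div_self (pow_ne_zero m hc)]
  obtain ⟨v, hv, hτv⟩ := exists_apply_eq_mul_of_cyclicNorm_eq_one hτ hnorm
  have hy₀ : cyclicNorm τ n y ≠ 0 := by
    intro h
    rw [h, zero_div, zero_mul] at hτv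
    exact hv ((map_eq_zero (τ ^ n)).1 hτv)
  have hw : cyclicNorm τ n (y * (v / τ v)) = c := by
    rw [map_mul, cyclicNorm_div_apply hv, hτv]
    field_simp
  exact ⟨_, pow_apply_eq_of_apply_cyclicNorm_eq (by rwa [hw]) (by rw [hw, hτc]), hw⟩

end Field

end CyclicNorm

section ArtinSchreier

open Polynomial

variable {K : Type*} [Field K] (p : ℕ)

/-- The Artin–Schreier polynomial `X ^ p - X - α`. In characteristic `p` it is used to adjoin to `K`
an element `ξ` with `ξ ^ p - ξ = α`. -/
noncomputable def artinSchreierPoly (α : K) : K[X] :=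
  X ^ p - (X + C α)

variable {p}

theorem degree_X_add_C_lt (hp : 1 < p) (α : K) : (X + C α).degree < (p : WithBot ℕ) := by
  rw [degree_X_add_C]
  exact_mod_cast hp

theorem monic_artinSchreierPoly (hp : 1 < p) (α : K) : (artinSchreierPoly p α).Monic :=
  monic_X_pow_sub (degree_X_add_C_lt hp α)

theorem natDegree_artinSchreierPoly (hp : 1 < p) (α : K) :
    (artinSchreierPoly p α).natDegree = p := by
  refine natDegree_eq_of_degree_eq_some ?_
  rw [artinSchreierPoly, degree_sub_eq_left_of_degree_lt, degree_X_pow]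
  rw [degree_X_pow]
  exact degree_X_add_C_lt hp α

theorem eval₂_artinSchreierPoly {L : Type*} [Field L] (f : K →+* L) (x : L) (α : K) :
    eval₂ f x (artinSchreierPoly p α) = x ^ p - (x + f α) := by
  simp only [artinSchreierPoly, eval₂_sub, eval₂_pow, eval₂_add, eval₂_X, eval₂_C]

theorem separable_artinSchreierPoly [CharP K p] (α : K) : (artinSchreierPoly p α).Separable := by
  have hderiv : derivative (artinSchreierPoly p α) = -1 := by
    simp [artinSchreierPoly, derivative_X_pow, CharP.cast_eq_zero]
  rw [separable_def, hderiv]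
  exact isCoprime_one_right.neg_right

variable [Fact p.Prime] [CharP K p]

theorem trace_pow_char {L : Type*} [Field L] [Algebra K L] [FiniteDimensional K L]
    [Algebra.IsSeparable K L] (x : L) : Algebra.trace K L (x ^ p) = Algebra.trace K L x ^ p := by
  let Ω := AlgebraicClosure K
  have : CharP Ω p := charP_of_injective_algebraMap (algebraMap K Ω).injective p
  apply (algebraMap K Ω).injective
  simp only [map_pow, trace_eq_sum_embeddings Ω, sum_pow_char]

theorem exists_pow_sub_eq_of_not_dvd_finrank {L : Type*} [Field L] [Algebra K L]
    [FiniteDimensional K L] [Algebra.IsSeparable K L] (hd : ¬ p ∣ Module.finrank K L) {α : K}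
    {ξ : L} (hξ : ξ ^ p - ξ = algebraMap K L α) : ∃ δ : K, δ ^ p - δ = α := by
  set d := Module.finrank K L
  have hd₀ : (d : K) ≠ 0 := by rwa [Ne, CharP.cast_eq_zero_iff K p]
  have hdp : (d : K) ^ p = d := map_natCast (frobenius K p) d
  have htr : Algebra.trace K L ξ ^ p - Algebra.trace K L ξ = d * α := by
    rw [← trace_pow_char, ← map_sub, hξ, Algebra.trace_algebraMap, nsmul_eq_mul]
  refine ⟨Algebra.trace K L ξ / d, ?_⟩
  rw [div_pow, hdp, ← sub_div, htr, mul_div_cancel_left₀ α hd₀]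

open IntermediateField in
theorem irreducible_artinSchreierPoly {α : K} (h : ∀ δ : K, δ ^ p - δ ≠ α) :
    Irreducible (artinSchreierPoly p α) := by
  have hp : 1 < p := (Fact.out : p.Prime).one_lt
  have hmonic := monic_artinSchreierPoly hp α
  obtain ⟨ξ, hξ⟩ := IsAlgClosed.exists_aeval_eq_zero (AlgebraicClosure K) (artinSchreierPoly p α)
    (degree_ne_of_natDegree_ne (by
      rw [natDegree_artinSchreierPoly hp]
      exact (zero_lt_one.trans hp).ne'))
  have hint : IsIntegral K ξ := ⟨_, hmonic, hξ⟩
  have hdvd : minpoly K ξ ∣ artinSchreierPoly p α := minpoly.dvd K ξ hξ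
  have : FiniteDimensional K K⟮ξ⟯ := adjoin.finiteDimensional hint
  have : Algebra.IsSeparable K K⟮ξ⟯ :=
    (isSeparable_adjoin_simple_iff_isSeparable K _).2 ((separable_artinSchreierPoly α).of_dvd hdvd)
  have hdeg : p ∣ (minpoly K ξ).natDegree := by
    by_contra hndvd
    rw [← adjoin.finrank hint] at hndvd
    obtain ⟨δ, hδ⟩ := exists_pow_sub_eq_of_not_dvd_finrank hndvd (α := α)
      (ξ := AdjoinSimple.gen K ξ) (Subtype.ext <| by
        rw [aeval_def, eval₂_artinSchreierPoly, ← sub_sub, sub_eq_zero] at hξ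
        exact hξ)
    exact h δ hδ
  have hle : (artinSchreierPoly p α).natDegree ≤ (minpoly K ξ).natDegree := by
    rw [natDegree_artinSchreierPoly hp]
    exact Nat.le_of_dvd (minpoly.natDegree_pos hint) hdeg
  rw [eq_of_monic_of_dvd_of_natDegree_le (minpoly.monic hint) hmonic hdvd hle]
  exact minpoly.irreducible hint

end ArtinSchreier

section ArtinSchreierCover

section PrimeFinrank

variable {K L : Type*} [Field K] [Field L] [Algebra K L] {σ : L ≃ₐ[K] L}

theorem fixedField_zpowers_eq_bot_of_prime_finrank (h : (Module.finrank K L).Prime) (hσ : σ ≠ 1) :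
    IntermediateField.fixedField (Subgroup.zpowers σ) = ⊥ := by
  have := IntermediateField.isSimpleOrder_of_finrank_prime K L h
  refine (eq_bot_or_eq_top _).resolve_right fun htop ↦ hσ (AlgEquiv.ext fun x ↦ ?_)
  have hx : x ∈ IntermediateField.fixedField (Subgroup.zpowers σ) := htop ▸ trivial
  exact (IntermediateField.mem_fixedField_iff _ x).1 hx σ (Subgroup.mem_zpowers σ)

theorem orderOf_eq_finrank_of_prime_finrank (h : (Module.finrank K L).Prime) (hσ : σ ≠ 1) :
    orderOf σ = Module.finrank K L := by
  have : FiniteDimensional K L := Module.finite_of_finrank_pos h.pos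
  rw [← Nat.card_zpowers, ← IntermediateField.finrank_fixedField_eq_card,
    fixedField_zpowers_eq_bot_of_prime_finrank h hσ, IntermediateField.finrank_bot']

theorem mem_bot_of_apply_eq_of_prime_finrank (h : (Module.finrank K L).Prime) (hσ : σ ≠ 1) {y : L}
    (hy : σ y = y) : y ∈ (⊥ : IntermediateField K L) := by
  have hle : Subgroup.zpowers σ ≤ MulAction.stabilizer (L ≃ₐ[K] L) y := by
    rwa [Subgroup.zpowers_le]
  rw [← fixedField_zpowers_eq_bot_of_prime_finrank h hσ, IntermediateField.mem_fixedField_iff]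
  exact fun g hg ↦ hle hg

end PrimeFinrank

variable {E : Type*} [Field E] {C : Type*} [Field C] [Algebra E C] {τ : C ≃ₐ[E] C}

section Extension

variable {B : Type*} [Field B] [Algebra E B] [Algebra C B] {T : B ≃ₐ[E] B}

theorem pow_apply_eq_add_sum (hT : ∀ x, algebraMap C B (τ x) = T (algebraMap C B x)) {ξ : B}
    {β : C} (hξ : T ξ = ξ + algebraMap C B β) (n : ℕ) :
    (T ^ n) ξ = ξ + algebraMap C B (∑ i ∈ Finset.range n, (τ ^ i) β) := by
  induction n with
  | zero => simp
  | succ n ih =>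
    rw [pow_succ, AlgEquiv.mul_apply, hξ, map_add, ih, ← map_pow_apply _ hT,
      Finset.sum_range_succ, map_add, add_assoc]

theorem orderOf_pow_eq_finrank_and_mem_range [IsScalarTower E C B]
    (hT : ∀ x, algebraMap C B (τ x) = T (algebraMap C B x)) {n : ℕ} (hτ : τ ^ n = 1) {ξ : B}
    {β : C} (hβ : ∑ i ∈ Finset.range n, (τ ^ i) β = 1) (hξ : T ξ = ξ + algebraMap C B β)
    (hB : (Module.finrank C B).Prime) :
    orderOf (T ^ n) = Module.finrank C B ∧
      ∀ y, (T ^ n) y = y → y ∈ Set.range (algebraMap C B) := by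
  let S : B ≃ₐ[C] B := AlgEquiv.ofRingEquiv (f := (T ^ n).toRingEquiv) fun x ↦
    (map_pow_apply _ hT n x).symm.trans (by rw [hτ, AlgEquiv.one_apply])
  have hS : AlgEquiv.restrictScalarsHom E S = T ^ n := AlgEquiv.ext fun _ ↦ rfl
  have hS₁ : S ≠ 1 := fun h ↦ by
    have hfix : (T ^ n) ξ = ξ := DFunLike.congr_fun h ξ
    rw [pow_apply_eq_add_sum hT hξ, hβ, map_one] at hfix
    exact one_ne_zero (left_eq_add.1 hfix.symm)
  constructor
  · rw [← hS, orderOf_injective _ (AlgEquiv.restrictScalarsHom_injective E)]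
    exact orderOf_eq_finrank_of_prime_finrank hB hS₁
  · exact fun y hy ↦ IntermediateField.mem_bot.1 (mem_bot_of_apply_eq_of_prime_finrank hB hS₁ hy)

end Extension

variable {p : ℕ} [Fact p.Prime] [CharP C p]

theorem apply_eq_self_of_pow_char_eq_self (σ : C ≃ₐ[E] C) {ε : C} (hε : ε ^ p = ε) : σ ε = ε := by
  have hbot : ε ∈ (⊥ : Subfield C) := (Subfield.mem_bot_iff_pow_eq_self C p).2 hε
  have hle : (⊥ : Subfield C) ≤ (σ : C →+* C).eqLocusField (RingHom.id C) := bot_le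
  exact hle hbot

theorem exists_sum_pow_apply_eq_one_and_apply_sub_eq (hτ : orderOf τ = p) :
    ∃ α β : C, ∑ i ∈ Finset.range p, (τ ^ i) β = 1 ∧ τ α - α = β ^ p - β := by
  subst hτ
  have hpos : 0 < orderOf τ := (Fact.out : (orderOf τ).Prime).pos
  obtain ⟨β, hβ⟩ := exists_sum_pow_apply_eq_one hpos
  obtain ⟨α, hα⟩ := exists_apply_sub_eq_of_sum_pow_apply_eq_zero hpos (γ := β ^ orderOf τ - β)
    (by simp only [map_sub, map_pow, Finset.sum_sub_distrib, ← sum_pow_char, hβ, one_pow, sub_self])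
  exact ⟨α, β, hβ, hα⟩

-- If `δ ^ p - δ = α`, then `ε = τ δ - δ - β` lies in the prime field, so `∑ τ ^ i ε = p ε = 0`;
-- but this sum telescopes to `-∑ τ ^ i β = -1`.
theorem pow_sub_ne_of_apply_sub_eq (hτ : τ ^ p = 1) {α β : C}
    (hβ : ∑ i ∈ Finset.range p, (τ ^ i) β = 1) (hα : τ α - α = β ^ p - β) (δ : C) :
    δ ^ p - δ ≠ α := by
  rintro rfl
  have hε : (τ δ - δ - β) ^ p = τ δ - δ - β := by
    rw [map_sub, map_pow] at hα
    rw [sub_pow_char, sub_pow_char]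
    linear_combination hα
  have hsum : ∑ i ∈ Finset.range p, (τ ^ i) (τ δ - δ - β) = 0 := by
    simp only [apply_eq_self_of_pow_char_eq_self _ hε, Finset.sum_const, Finset.card_range,
      nsmul_eq_mul, CharP.cast_eq_zero, zero_mul]
  simp only [map_sub, ← AlgEquiv.mul_apply, ← pow_succ, Finset.sum_sub_distrib, hβ] at hsum
  rw [← Finset.sum_sub_distrib, Finset.sum_range_sub (fun i ↦ (τ ^ i) δ), hτ] at hsum
  simp at hsum

theorem exists_algEquiv_adjoinRoot_artinSchreierPoly [Algebra.IsAlgebraic E C] {α β : C}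
    [Fact (Irreducible (artinSchreierPoly p α))] (hα : τ α - α = β ^ p - β) :
    ∃ T : AdjoinRoot (artinSchreierPoly p α) ≃ₐ[E] AdjoinRoot (artinSchreierPoly p α),
      (∀ x, algebraMap C _ (τ x) = T (algebraMap C _ x)) ∧
        T (AdjoinRoot.root _) = AdjoinRoot.root _ + algebraMap C _ β := by
  set f := artinSchreierPoly p α
  set ξ := AdjoinRoot.root f
  have : CharP (AdjoinRoot f) p :=
    charP_of_injective_algebraMap (algebraMap C (AdjoinRoot f)).injective p
  have hfin : FiniteDimensional C (AdjoinRoot f) :=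
    (AdjoinRoot.powerBasis (Fact.out : Irreducible f).ne_zero).finite
  have : Algebra.IsAlgebraic E (AdjoinRoot f) := Algebra.IsAlgebraic.trans E C _
  let j : C →ₐ[E] AdjoinRoot f := AdjoinRoot.ofAlgHom E f
  have hξ : ξ ^ p - (ξ + j α) = 0 := by
    rw [← AdjoinRoot.eval₂_root f, eval₂_artinSchreierPoly]
    rfl
  have hev : (artinSchreierPoly p α).eval₂ (j.comp τ.toAlgHom : C →ₐ[E] AdjoinRoot f)
      (ξ + j β) = 0 := by
    rw [eval₂_artinSchreierPoly, add_pow_char]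
    change ξ ^ p + j β ^ p - (ξ + j β + j (τ α)) = 0
    rw [eq_add_of_sub_eq hα, map_add, map_sub, map_pow]
    linear_combination hξ
  let T₀ : AdjoinRoot f →ₐ[E] AdjoinRoot f :=
    AdjoinRoot.liftAlgHom f (j.comp τ.toAlgHom) (ξ + j β) hev
  exact ⟨AlgEquiv.ofBijective T₀ (Algebra.IsAlgebraic.algHom_bijective T₀),
    fun x ↦ (AdjoinRoot.liftAlgHom_of f _ _ hev x).symm, AdjoinRoot.liftAlgHom_root f _ _ hev⟩

end ArtinSchreierCover

theorem exists_artinSchreier_cover {E : Type*} [Field E] {C : Type u} [Field C] [Algebra E C]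
    [Algebra.IsAlgebraic E C] {p : ℕ} [Fact p.Prime] [CharP C p] {τ : C ≃ₐ[E] C}
    (hτ : orderOf τ = p) :
    ∃ (B : Type u) (_ : Field B) (_ : Algebra E B) (j : C →ₐ[E] B) (T : B ≃ₐ[E] B),
      Algebra.IsAlgebraic E B ∧ (∀ x, j (τ x) = T (j x)) ∧ orderOf (T ^ p) = p ∧
        ∀ y, (T ^ p) y = y → y ∈ Set.range j := by
  have hp : p.Prime := Fact.out
  have hτp : τ ^ p = 1 := hτ ▸ pow_orderOf_eq_one τ
  obtain ⟨α, β, hβ, hα⟩ := exists_sum_pow_apply_eq_one_and_apply_sub_eq hτ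
  have hirr := irreducible_artinSchreierPoly (pow_sub_ne_of_apply_sub_eq hτp hβ hα)
  have : Fact (Irreducible (artinSchreierPoly p α)) := ⟨hirr⟩
  let b := AdjoinRoot.powerBasis hirr.ne_zero
  have : FiniteDimensional C (AdjoinRoot (artinSchreierPoly p α)) := b.finite
  have hrank : Module.finrank C (AdjoinRoot (artinSchreierPoly p α)) = p := by
    rw [b.finrank, AdjoinRoot.powerBasis_dim, natDegree_artinSchreierPoly hp.one_lt]
  obtain ⟨T, hT, hTξ⟩ := exists_algEquiv_adjoinRoot_artinSchreierPoly hα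
  obtain ⟨hord, hfix⟩ := orderOf_pow_eq_finrank_and_mem_range hT hτp hβ hTξ (hrank.symm ▸ hp)
  exact ⟨_, inferInstance, inferInstance, IsScalarTower.toAlgHom E C _, T,
    Algebra.IsAlgebraic.trans E C _, hT, hord.trans hrank, hfix⟩

section Descent

variable {E C : Type*} [Field E] [Field C] [Algebra E C]

theorem exists_isSeparable_pow [Algebra.IsAlgebraic E C] (q : ℕ) [ExpChar E q] (x : C) :
    ∃ n : ℕ, IsSeparable E (x ^ q ^ n) := by
  obtain ⟨n, z, hz⟩ := IsPurelyInseparable.pow_mem (separableClosure E C) q x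
  exact ⟨n, hz ▸ mem_separableClosure_iff.1 z.2⟩

theorem exists_isSeparable_apply_ne [Algebra.IsAlgebraic E C] {τ : C ≃ₐ[E] C} (hτ : τ ≠ 1) :
    ∃ x : C, IsSeparable E x ∧ τ x ≠ x := by
  by_contra! hfix
  obtain ⟨q, _⟩ := ExpChar.exists E
  have : ExpChar C q := expChar_of_injective_algebraMap (algebraMap E C).injective q
  refine hτ (AlgEquiv.ext fun x ↦ ?_)
  obtain ⟨n, hn⟩ := exists_isSeparable_pow (E := E) q x
  have hpow : τ x ^ q ^ n = x ^ q ^ n := by rw [← map_pow, hfix _ hn]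
  exact iterateFrobenius_inj C q n
    (by simpa only [iterateFrobenius_def, AlgEquiv.one_apply] using hpow)

theorem exists_restrict_orderOf_eq {p : ℕ} [Fact p.Prime] {τ : C ≃ₐ[E] C} (hτ : τ ^ p = 1)
    {M : IntermediateField E C} [Algebra.IsAlgebraic E M] (hM : ∀ x ∈ M, τ x ∈ M) {x : C}
    (hx : x ∈ M) (hτx : τ x ≠ x) :
    ∃ σ : M ≃ₐ[E] M, orderOf σ = p ∧ ∀ y : M, (σ y : C) = τ y := by
  let g : M →ₐ[E] M := (τ.toAlgHom.comp M.val).codRestrict M.toSubalgebra fun y ↦ hM y y.2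
  let σ := AlgEquiv.ofBijective g (Algebra.IsAlgebraic.algHom_bijective g)
  have hσ (y : M) : (σ y : C) = τ y := rfl
  refine ⟨σ, orderOf_eq_prime (AlgEquiv.ext fun y ↦ Subtype.ext ?_) fun h ↦ hτx ?_, hσ⟩
  · have hpow := map_pow_apply (algebraMap M C) (τ := σ) (T := τ) hσ p y
    rwa [hτ] at hpow
  · exact (hσ ⟨x, hx⟩).symm.trans (by rw [h, AlgEquiv.one_apply])

theorem algebraMap_norm_fixedField_zpowers [FiniteDimensional E C] (τ : C ≃ₐ[E] C) (y : C) :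
    algebraMap _ C (Algebra.norm (IntermediateField.fixedField (Subgroup.zpowers τ)) y)
      = cyclicNorm τ (orderOf τ) y := by
  have : IsGalois (IntermediateField.fixedField (Subgroup.zpowers τ)) C :=
    IsGalois.of_fixed_field C (Subgroup.zpowers τ)
  rw [Algebra.norm_eq_prod_automorphisms, cyclicNorm_apply,
    ← Fin.prod_univ_eq_prod_range (fun i ↦ (τ ^ i) y)]
  exact (Fintype.prod_equiv ((finEquivZPowers (isOfFinOrder_of_finite τ)).trans
    (IntermediateField.subgroupEquivAlgEquiv (Subgroup.zpowers τ)).toEquiv) _ _ fun _ ↦ rfl).symm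

variable (E C) in
/-- The intermediate field of all elements of `C` whose `p ^ n`-th power is separable over `E`. It
replaces `C` in norm equations whose solutions are to have a separable `p ^ n`-th power. -/
noncomputable def powSeparableClosure (p : ℕ) [ExpChar C p] (n : ℕ) : IntermediateField E C :=
  ((separableClosure E C).toSubfield.comap (iterateFrobenius C p n)).toIntermediateField fun x ↦ by
    change iterateFrobenius C p n (algebraMap E C x) ∈ separableClosure E C
    rw [iterateFrobenius_def, ← map_pow]
    exact algebraMap_mem _ _

theorem mem_powSeparableClosure {p : ℕ} [ExpChar C p] {n : ℕ} {x : C} :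
    x ∈ powSeparableClosure E C p n ↔ IsSeparable E (x ^ p ^ n) := by
  rw [← mem_separableClosure_iff]
  exact Iff.rfl

theorem exists_finiteDimensional_isSeparable_stable {τ : C ≃ₐ[E] C} (hτ : 0 < orderOf τ) {x c : C}
    (hx : IsSeparable E x) (hc : IsSeparable E c) (hτc : τ c = c) :
    ∃ M : IntermediateField E C, FiniteDimensional E M ∧ Algebra.IsSeparable E M ∧
      (∀ y ∈ M, τ y ∈ M) ∧ x ∈ M ∧ c ∈ M := by
  let S : Set C := insert c (MulAction.orbit (Subgroup.zpowers τ) x)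
  have hS (s : C) (hs : s ∈ S) : IsSeparable E s := by
    rcases hs with rfl | ⟨σ, rfl⟩
    · exact hc
    · exact hx.map (σ : C ≃ₐ[E] C).toAlgHom (σ : C ≃ₐ[E] C).injective
  have : Finite (Subgroup.zpowers τ) := Nat.finite_of_card_ne_zero (by
    rw [Nat.card_zpowers]
    exact hτ.ne')
  have : Finite S := (Set.finite_range _).insert c
  have hsub : S ⊆ IntermediateField.adjoin E S := IntermediateField.subset_adjoin E S
  refine ⟨IntermediateField.adjoin E S,
    IntermediateField.finiteDimensional_adjoin fun s hs ↦ (hS s hs).isIntegral,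
    (IntermediateField.isSeparable_adjoin_iff_isSeparable E C).2 hS, fun y hy ↦ ?_,
    hsub (Or.inr (MulAction.mem_orbit_self x)), hsub (Or.inl rfl)⟩
  suffices h : IntermediateField.adjoin E S ≤ (IntermediateField.adjoin E S).comap τ.toAlgHom from
    h hy
  rw [IntermediateField.adjoin_le_iff]
  rintro s (rfl | hs)
  · exact hsub (Or.inl hτc)
  · exact hsub (Or.inr (MulAction.mem_orbit_of_mem_orbit
      (⟨τ, Subgroup.mem_zpowers τ⟩ : Subgroup.zpowers τ) hs))

end Descent

section NormSurjectivity

/-- In every algebraic extension of `E`, every nonzero element fixed by an automorphism of order `p`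
is a norm for that automorphism. This condition passes to algebraic extensions of `E` and implies
that `Br(E)_p = 0`. -/
def CyclicNormsSurjective (E : Type u) [Field E] (p : ℕ) : Prop :=
  ∀ (C : Type u) [Field C] [Algebra E C] [Algebra.IsAlgebraic E C] (τ : C ≃ₐ[E] C),
    orderOf τ = p → ∀ c : C, c ≠ 0 → τ c = c → ∃ y : C, cyclicNorm τ p y = c

/-- The variant of `CyclicNormsSurjective` in which both the fixed element and its preimage are
required to have a separable `m`-th power. For `m = 1` this is a statement about finite separable
extensions, and for `m = p ^ n` it interpolates between `m = 1` and the general case. -/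
def CyclicNormsSurjectiveOnPowSeparable (E : Type u) [Field E] (p m : ℕ) : Prop :=
  ∀ (C : Type u) [Field C] [Algebra E C] [Algebra.IsAlgebraic E C] (τ : C ≃ₐ[E] C),
    orderOf τ = p → ∀ c : C, c ≠ 0 → τ c = c → IsSeparable E (c ^ m) →
      ∃ y : C, IsSeparable E (y ^ m) ∧ cyclicNorm τ p y = c

variable {E : Type u} [Field E] {p : ℕ}

theorem CyclicNormsSurjective.trans (h : CyclicNormsSurjective E p) (F : Type u) [Field F]
    [Algebra E F] [Algebra.IsAlgebraic E F] : CyclicNormsSurjective F p := by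
  intro C _ _ _ τ hτ c hc hτc
  let : Algebra E C := Algebra.compHom C (algebraMap E F)
  have : IsScalarTower E F C := .of_algebraMap_eq fun _ ↦ rfl
  have : Algebra.IsAlgebraic E C := Algebra.IsAlgebraic.trans E F C
  have hord : orderOf (AlgEquiv.restrictScalarsHom E τ) = p :=
    (orderOf_injective _ (AlgEquiv.restrictScalarsHom_injective E) τ).trans hτ
  obtain ⟨y, hy⟩ := h C (AlgEquiv.restrictScalarsHom E τ) hord c hc hτc
  exact ⟨y, (map_cyclicNorm (RingHom.id C) (τ := τ) (T := AlgEquiv.restrictScalarsHom E τ)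
    (fun _ ↦ rfl) p y).trans hy⟩

variable [Fact p.Prime]

theorem cyclicNormsSurjectiveOnPowSeparable_one
    (h : ∀ (L : Type u) [Field L] [Algebra E L] [FiniteDimensional E L] [Algebra.IsSeparable E L]
      (K : IntermediateField E L) [IsGalois K L], Module.finrank K L = p → normGroup K L = ⊤) :
    CyclicNormsSurjectiveOnPowSeparable E p 1 := by
  have hp : p.Prime := Fact.out
  simp only [CyclicNormsSurjectiveOnPowSeparable, pow_one]
  intro C _ _ _ τ hτ c hc hτc hcs
  obtain ⟨x, hxs, hτx⟩ := exists_isSeparable_apply_ne (τ := τ)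
    (fun h ↦ hp.one_lt.ne (by rw [← hτ, h, orderOf_one]))
  obtain ⟨M, _, _, hM, hxM, hcM⟩ :=
    exists_finiteDimensional_isSeparable_stable (hτ ▸ hp.pos) hxs hcs hτc
  obtain ⟨σ, hσ, hστ⟩ := exists_restrict_orderOf_eq (hτ ▸ pow_orderOf_eq_one τ) hM hxM hτx
  let K := IntermediateField.fixedField (Subgroup.zpowers σ)
  have : IsGalois K M := IsGalois.of_fixed_field M (Subgroup.zpowers σ)
  have hrank : Module.finrank K M = p := by
    rw [IntermediateField.finrank_fixedField_eq_card, Nat.card_zpowers, hσ]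
  have hle : Subgroup.zpowers σ ≤ MulAction.stabilizer (M ≃ₐ[E] M) (⟨c, hcM⟩ : M) := by
    rw [Subgroup.zpowers_le]
    exact Subtype.ext ((hστ _).trans hτc)
  let c' : K := ⟨⟨c, hcM⟩, (IntermediateField.mem_fixedField_iff _ _).2 fun g hg ↦ hle hg⟩
  have hc' : c' ≠ 0 := fun h ↦ hc (congrArg (fun t : K ↦ ((t : M) : C)) h)
  obtain ⟨y, hy⟩ : Units.mk0 c' hc' ∈ normGroup K M := h M K hrank ▸ trivial
  have hyc : Algebra.norm K (y : M) = c' := congrArg Units.val hy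
  refine ⟨(y : M), (Algebra.IsSeparable.isSeparable E (y : M)).map M.val M.val.injective, ?_⟩
  have hnorm : cyclicNorm σ p (y : M) = ⟨c, hcM⟩ := by
    rw [← hσ, ← algebraMap_norm_fixedField_zpowers, hyc]
    rfl
  exact (map_cyclicNorm (algebraMap M C) (τ := σ) hστ p (y : M)).symm.trans
    (congrArg Subtype.val hnorm)

theorem CyclicNormsSurjectiveOnPowSeparable.of_coprime
    (h : CyclicNormsSurjectiveOnPowSeparable E p 1) {q : ℕ} [ExpChar E q] (hq : q.Coprime p) :
    CyclicNormsSurjective E p := by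
  intro C _ _ _ τ hτ c hc hτc
  obtain ⟨n, hn⟩ := exists_isSeparable_pow (E := E) q c
  obtain ⟨y, -, hy⟩ := h C τ hτ (c ^ q ^ n) (pow_ne_zero _ hc) (by rw [map_pow, hτc]) (by simpa)
  obtain ⟨a, -, ha⟩ := Nat.exists_mul_mod_eq_one_of_coprime (hq.pow_left n)
    (Fact.out : p.Prime).one_lt
  set b := q ^ n * a / p
  have hab : q ^ n * a = b * p + 1 := by
    rw [← ha, mul_comm b, Nat.div_add_mod]
  refine ⟨y ^ a / c ^ b, ?_⟩
  rw [cyclicNorm_div, map_pow, hy, map_pow, cyclicNorm_of_apply_eq hτc, ← pow_mul, ← pow_mul, hab,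
    pow_succ, mul_comm b, mul_div_cancel_left₀ _ (pow_ne_zero _ hc)]

section CharP

variable [CharP E p]

theorem CyclicNormsSurjectiveOnPowSeparable.exists_cyclicNorm_eq {n : ℕ}
    (h : CyclicNormsSurjectiveOnPowSeparable E p (p ^ n)) {C : Type u} [Field C] [Algebra E C]
    [Algebra.IsAlgebraic E C] {τ : C ≃ₐ[E] C} (hτ : orderOf τ = p) {c : C} (hc : c ≠ 0)
    (hτc : τ c = c) (hcs : IsSeparable E (c ^ p ^ (n + 1))) : ∃ y : C, cyclicNorm τ p y = c := by
  have hp : p.Prime := Fact.out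
  have : CharP C p := charP_of_injective_algebraMap (algebraMap E C).injective p
  obtain ⟨z, hzs, hz⟩ := h C τ hτ (c ^ p) (pow_ne_zero _ hc) (by rw [map_pow, hτc])
    (by rwa [← pow_mul, ← pow_succ'])
  have hz₀ : z ≠ 0 := by
    rintro rfl
    exact pow_ne_zero p hc (hz.symm.trans (cyclicNorm_map_zero τ hp.ne_zero))
  obtain ⟨B, _, _, j, T, _, hjT, hT, hfix⟩ := exists_artinSchreier_cover hτ
  have hjN (x : C) : j (cyclicNorm τ p x) = cyclicNorm T p (j x) :=
    map_cyclicNorm (j : C →+* B) hjT p x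
  have hTz : (T ^ p) (j z) = j z := by
    have hpow := map_pow_apply (j : C →+* B) hjT p z
    rw [← hτ, pow_orderOf_eq_one, hτ] at hpow
    exact hpow.symm
  obtain ⟨y, -, hy⟩ := h B (T ^ p) hT (j z) ((map_ne_zero j).2 hz₀) hTz
    (by rw [← map_pow]; exact hzs.map j j.injective)
  obtain ⟨w, hw, hwc⟩ := exists_cyclicNorm_eq_of_cyclicNorm_eq_pow (τ := T) (n := p) (c := j c)
    (y := y) (by rw [hT]; exact hp.pos) ((map_ne_zero j).2 hc) (by rw [← hjT, hτc])
    (by rw [hT, hy, ← hjN, hz, map_pow])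
  obtain ⟨x, rfl⟩ := hfix w hw
  exact ⟨x, j.injective ((hjN x).trans hwc)⟩

theorem CyclicNormsSurjectiveOnPowSeparable.pow_succ {n : ℕ}
    (h : CyclicNormsSurjectiveOnPowSeparable E p (p ^ n)) :
    CyclicNormsSurjectiveOnPowSeparable E p (p ^ (n + 1)) := by
  intro C _ _ _ τ hτ c hc hτc hcs
  have : CharP C p := charP_of_injective_algebraMap (algebraMap E C).injective p
  let M := powSeparableClosure E C p (n + 1)
  have hM (x : C) (hx : x ∈ M) : τ x ∈ M := by
    rw [mem_powSeparableClosure] at hx ⊢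
    rw [← map_pow]
    exact hx.map τ.toAlgHom τ.injective
  obtain ⟨x, hxs, hτx⟩ := exists_isSeparable_apply_ne (τ := τ)
    (fun h ↦ (Fact.out : p.Prime).one_lt.ne (by rw [← hτ, h, orderOf_one]))
  have hxM : x ∈ M := mem_powSeparableClosure.2 <|
    mem_separableClosure_iff.1 (pow_mem (mem_separableClosure_iff.2 hxs) _)
  obtain ⟨σ, hσ, hστ⟩ := exists_restrict_orderOf_eq (hτ ▸ pow_orderOf_eq_one τ) hM hxM hτx
  let c' : M := ⟨c, mem_powSeparableClosure.2 hcs⟩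
  have hcs' : IsSeparable E (c' ^ p ^ (n + 1)) :=
    IsSeparable.of_algHom M.val hcs
  obtain ⟨y, hy⟩ := h.exists_cyclicNorm_eq hσ (c := c') (fun h ↦ hc (congrArg Subtype.val h))
    (Subtype.ext ((hστ c').trans hτc)) hcs'
  exact ⟨y, mem_powSeparableClosure.1 y.2,
    (map_cyclicNorm (algebraMap M C) (τ := σ) hστ p y).symm.trans (congrArg Subtype.val hy)⟩

end CharP

theorem CyclicNormsSurjectiveOnPowSeparable.cyclicNormsSurjective
    (h : CyclicNormsSurjectiveOnPowSeparable E p 1) : CyclicNormsSurjective E p := by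
  obtain ⟨q, hq⟩ := ExpChar.exists E
  by_cases hqp : q = p
  · subst hqp
    have : CharP E q := by
      cases hq with
      | zero => exact absurd Fact.out Nat.not_prime_one
      | prime => assumption
    have hall (n : ℕ) : CyclicNormsSurjectiveOnPowSeparable E q (q ^ n) := by
      induction n with
      | zero => simpa only [pow_zero] using h
      | succ n ih => exact ih.pow_succ
    intro C _ _ _ τ hτ c hc hτc
    obtain ⟨n, hn⟩ := exists_isSeparable_pow (E := E) q c
    obtain ⟨y, -, hy⟩ := hall n C τ hτ c hc hτc hn
    exact ⟨y, hy⟩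
  · refine h.of_coprime (q := q) ?_
    rcases expChar_is_prime_or_one E q with hq | rfl
    · exact (Nat.coprime_primes hq Fact.out).2 hqp
    · exact Nat.coprime_one_left p

end NormSurjectivity

section AlgebraicClosure

theorem normGroup_eq_top_of_ringEquiv {K L K' L' : Type*} [Field K] [Field L] [Algebra K L]
    [Field K'] [Field L'] [Algebra K' L'] (e₁ : K ≃+* K') (e₂ : L ≃+* L')
    (h : (algebraMap K' L').comp (e₁ : K →+* K') = (e₂ : L →+* L').comp (algebraMap K L))
    (htop : normGroup K' L' = ⊤) : normGroup K L = ⊤ := by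
  refine eq_top_iff.2 fun c _ ↦ ?_
  obtain ⟨v, hv⟩ : Units.map (e₁ : K →* K') c ∈ normGroup K' L' := htop ▸ trivial
  refine ⟨Units.map (e₂.symm : L' →* L) v, Units.ext ?_⟩
  have hv' : Algebra.norm K' (v : L') = e₁ c := congrArg Units.val hv
  change Algebra.norm K (e₂.symm v) = c
  rw [Algebra.norm_eq_of_equiv_equiv e₁ e₂ h, e₂.apply_symm_apply, hv', e₁.symm_apply_apply]

theorem isCyclic_algEquiv_of_prime_finrank {p : ℕ} [Fact p.Prime] {K L : Type*} [Field K] [Field L]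
    [Algebra K L] [IsGalois K L] (h : Module.finrank K L = p) : IsCyclic (L ≃ₐ[K] L) := by
  have : FiniteDimensional K L :=
    Module.finite_of_finrank_pos (by rw [h]; exact (Fact.out : p.Prime).pos)
  exact isCyclic_of_prime_card (p := p) (by rw [IsGalois.card_aut_eq_finrank, h])

theorem exists_cyclic_normGroup_ne_top_of_normGroup_ne_top {p : ℕ} [Fact p.Prime] {E L : Type*}
    [Field E] [Field L] [Algebra E L] [FiniteDimensional E L] [Algebra.IsSeparable E L]
    (K : IntermediateField E L) [IsGalois K L] (hK : Module.finrank K L = p)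
    (hN : normGroup K L ≠ ⊤) :
    ∃ F₁ : IntermediateField E (AlgebraicClosure E),
      ∃ F₂ : IntermediateField F₁ (AlgebraicClosure E),
        FiniteDimensional E F₁ ∧ Algebra.IsSeparable E F₁ ∧
        Module.finrank F₁ F₂ = p ∧ IsGalois F₁ F₂ ∧ IsCyclic (F₂ ≃ₐ[F₁] F₂) ∧
        normGroup F₁ F₂ ≠ ⊤ := by
  let ι : L →ₐ[E] AlgebraicClosure E := IsAlgClosed.lift
  let F₁ : IntermediateField E (AlgebraicClosure E) := K.map ι
  have hle : F₁ ≤ ι.fieldRange := by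
    rintro _ ⟨x, -, rfl⟩
    exact ⟨x, rfl⟩
  let F₂ : IntermediateField F₁ (AlgebraicClosure E) := IntermediateField.extendScalars hle
  let e₁ : K ≃ₐ[E] F₁ := K.equivMap ι
  let e₂ : L ≃+* F₂ := (AlgEquiv.ofInjectiveField ι).toRingEquiv
  have hcomp : (algebraMap F₁ F₂).comp (e₁.toRingEquiv : K →+* F₁) =
      (e₂ : L →+* F₂).comp (algebraMap K L) := rfl
  have hrank : Module.finrank F₁ F₂ = p :=
    (Algebra.finrank_eq_of_equiv_equiv e₁.toRingEquiv e₂ hcomp).symm.trans hK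
  have hgal : IsGalois F₁ F₂ := IsGalois.of_equiv_equiv hcomp
  exact ⟨F₁, F₂, Module.Finite.equiv e₁.toLinearEquiv,
    Algebra.IsSeparable.of_algHom E K e₁.symm.toAlgHom, hrank, hgal,
    isCyclic_algEquiv_of_prime_finrank hrank,
    fun h ↦ hN (normGroup_eq_top_of_ringEquiv e₁.toRingEquiv e₂ hcomp h)⟩

end AlgebraicClosure

section Intertwiners

/-- Twisting `x : D` by an automorphism `g` of `L`: the sum of `j (g bᵢ) * x * j bᵢ'` over a basis
`b` of `L` and its dual basis `b'` for the trace form, where `j : L → D`. A nonzero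
twist realizes `g` by conjugation, as in the Skolem–Noether theorem. -/
noncomputable def galoisTwist {M L D : Type*} [Field M] [Field L] [Algebra M L]
    [FiniteDimensional M L] [Algebra.IsSeparable M L] [Ring D] [Algebra M D] (j : L →ₐ[M] D)
    (g : L ≃ₐ[M] L) (x : D) : D :=
  ∑ i, j (g (Module.finBasis M L i)) * x * j ((Module.finBasis M L).traceDual i)

variable {M L D : Type*} [Field M] [Field L] [Algebra M L] [FiniteDimensional M L]

section Trace

variable [Algebra.IsSeparable M L] {ι : Type*} [Fintype ι] [DecidableEq ι] (b : Module.Basis ι M L)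

theorem sum_trace_mul_smul_traceDual (x : L) :
    ∑ i, Algebra.trace M L (x * b i) • b.traceDual i = x := by
  simpa only [Module.Basis.traceDual_repr_apply, Algebra.traceForm_apply] using
    b.traceDual.sum_repr x

theorem sum_trace_mul_traceDual_smul (x : L) :
    ∑ i, Algebra.trace M L (x * b.traceDual i) • b i = x := by
  simpa only [Module.Basis.traceDual_traceDual] using sum_trace_mul_smul_traceDual b.traceDual x

end Trace

variable [Ring D] [Algebra M D] (j : L →ₐ[M] D)

theorem galoisTwist_mul [Algebra.IsSeparable M L] (g : L ≃ₐ[M] L) (x : D) (l : L) :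
    galoisTwist j g x * j l = j (g l) * galoisTwist j g x := by
  set b := Module.finBasis M L
  calc galoisTwist j g x * j l
      = ∑ k, j (g (b k)) * x * j (l * b.traceDual k) := by
        simp only [galoisTwist, Finset.sum_mul, mul_assoc, ← map_mul, mul_comm l, b]
    _ = ∑ k, ∑ i, Algebra.trace M L (l * b.traceDual k * b i) •
          (j (g (b k)) * x * j (b.traceDual i)) := by
        refine Finset.sum_congr rfl fun k _ ↦ ?_
        conv_lhs => rw [← sum_trace_mul_smul_traceDual b (l * b.traceDual k)]
        simp only [map_sum, map_smul, Finset.mul_sum, mul_smul_comm]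
    _ = ∑ i, j (g (l * b i)) * x * j (b.traceDual i) := by
        rw [Finset.sum_comm]
        refine Finset.sum_congr rfl fun i _ ↦ ?_
        conv_rhs => rw [← sum_trace_mul_traceDual_smul b (l * b i)]
        simp only [map_sum, map_smul, Finset.sum_mul, smul_mul_assoc, mul_right_comm]
    _ = j (g l) * galoisTwist j g x := by
        simp only [galoisTwist, Finset.mul_sum, map_mul, mul_assoc, b]

theorem sum_galoisTwist [IsGalois M L] (x : D) : ∑ g, galoisTwist j g x = x := by
  set b := Module.finBasis M L
  calc ∑ g, galoisTwist j g x
      = ∑ i, j (algebraMap M L (Algebra.trace M L (b i))) * x * j (b.traceDual i) := by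
        simp only [galoisTwist, trace_eq_sum_automorphisms, map_sum, Finset.sum_mul, b]
        exact Finset.sum_comm
    _ = x * j (∑ i, Algebra.trace M L (1 * b i) • b.traceDual i) := by
        simp only [AlgHom.commutes, one_mul, map_sum, map_smul, Finset.mul_sum, mul_smul_comm,
          ← Algebra.smul_def, smul_mul_assoc]
    _ = x := by rw [sum_trace_mul_smul_traceDual, map_one, mul_one]

-- If all twists by `g ≠ 1` vanish, then `x` is its own twist by the identity.
theorem exists_ne_one_mul_eq_apply_mul [IsGalois M L] {l : L} {x : D} (hlx : x * j l ≠ j l * x) :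
    ∃ (u : D) (g : L ≃ₐ[M] L), u ≠ 0 ∧ g ≠ 1 ∧ ∀ l, u * j l = j (g l) * u := by
  by_contra! h
  have hzero (g : L ≃ₐ[M] L) (hg : g ≠ 1) : galoisTwist j g x = 0 := by
    by_contra hne
    obtain ⟨l, hl⟩ := h _ g hne hg
    exact hl (galoisTwist_mul j g x l)
  have hone : galoisTwist j 1 x = x := by
    rw [← Finset.sum_eq_single_of_mem 1 (Finset.mem_univ _) fun g _ ↦ hzero g, sum_galoisTwist]
  apply hlx
  rw [← hone, galoisTwist_mul, AlgEquiv.one_apply]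

end Intertwiners

section TwistedPowers

variable {R C D : Type*} [CommSemiring R] [CommSemiring C] [Algebra R C] [Semiring D]
  {τ : C ≃ₐ[R] C} {i : C →+* D} {u : D}

theorem pow_mul_eq_map_pow_apply_mul (hu : ∀ c, u * i c = i (τ c) * u) (n : ℕ) (c : C) :
    u ^ n * i c = i ((τ ^ n) c) * u ^ n := by
  induction n generalizing c with
  | zero => simp only [pow_zero, one_mul, mul_one, AlgEquiv.one_apply]
  | succ n ih =>
    rw [pow_succ u, mul_assoc, hu, ← mul_assoc, ih, mul_assoc, ← AlgEquiv.mul_apply, ← pow_succ]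

theorem map_mul_pow_eq_map_cyclicNorm_mul (hu : ∀ c, u * i c = i (τ c) * u) (n : ℕ) (y : C) :
    (i y * u) ^ n = i (cyclicNorm τ n y) * u ^ n := by
  induction n with
  | zero => simp only [pow_zero, cyclicNorm_zero, map_one, mul_one]
  | succ n ih =>
    rw [pow_succ', ih, cyclicNorm_succ', mul_assoc, ← mul_assoc u, hu, map_mul, pow_succ']
    simp only [mul_assoc]

end TwistedPowers

section DivisionAlgebras

theorem finrank_dvd_of_algHom_module {F C A V : Type*} [Field F] [DivisionRing C] [Ring A]
    [Algebra F C] [Algebra F A] (f : C →ₐ[F] A) [AddCommGroup V] [Module F V] [Module A V]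
    [IsScalarTower F A V] : Module.finrank F C ∣ Module.finrank F V := by
  let : Module C V := Module.compHom V (f : C →+* A)
  have : IsScalarTower F C V := ⟨fun r c v ↦ by
    change f (r • c) • v = r • (f c • v)
    rw [map_smul, smul_assoc]⟩
  exact Module.finrank_dvd_finrank_right F C V

section Minpoly

variable {M D : Type*} [Field M] [Ring D] [Algebra M D]

/-- The inclusion of the subalgebra generated by `a` in an algebra that need not be commutative,
with that subalgebra presented as the quotient by the minimal polynomial of `a`. -/
noncomputable def adjoinRootMinpolyAlgHom (a : D) : AdjoinRoot (minpoly M a) →ₐ[M] D :=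
  Ideal.Quotient.liftₐ (Ideal.span {minpoly M a}) (Polynomial.aeval a) fun x hx ↦ by
    obtain ⟨y, rfl⟩ := Ideal.mem_span_singleton.1 hx
    rw [map_mul, minpoly.aeval, zero_mul]

variable [IsDomain D] [FiniteDimensional M D]

theorem natDegree_minpoly_dvd_finrank (a : D) :
    (minpoly M a).natDegree ∣ Module.finrank M D := by
  have hirr : Irreducible (minpoly M a) := minpoly.irreducible (Algebra.IsIntegral.isIntegral a)
  have : Fact (Irreducible (minpoly M a)) := ⟨hirr⟩
  have h := finrank_dvd_of_algHom_module (V := D) (adjoinRootMinpolyAlgHom (M := M) a)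
  rwa [(AdjoinRoot.powerBasis hirr.ne_zero).finrank, AdjoinRoot.powerBasis_dim] at h

-- Otherwise `v` is a root of `1 + X + ⋯ + X ^ (p - 1)`, whose degree is smaller than `p`.
theorem mem_bot_of_pow_eq_one {p k : ℕ} [Fact p.Prime] (hD : Module.finrank M D = p ^ k) {v : D}
    (hv : v ^ p = 1) : v ∈ (⊥ : Subalgebra M D) := by
  have hp : p.Prime := Fact.out
  by_cases hv₁ : v = 1
  · exact hv₁ ▸ one_mem _
  let f : Polynomial M := ∑ i ∈ Finset.range p, Polynomial.X ^ i
  have hf : f.Monic := Polynomial.monic_geom_sum_X hp.ne_zero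
  have hfv : Polynomial.aeval v f = 0 := by
    have hgeom := geom_sum_mul v p
    rw [hv, sub_self, mul_eq_zero, or_iff_left (sub_ne_zero.2 hv₁)] at hgeom
    simpa only [f, map_sum, map_pow, Polynomial.aeval_X] using hgeom
  have hfdeg : f.natDegree < p := by
    refine (Polynomial.natDegree_sum_le_of_forall_le _ _ (n := p - 1) fun i hi ↦ ?_).trans_lt
      (Nat.sub_lt hp.pos one_pos)
    rw [Polynomial.natDegree_X_pow]
    exact Nat.le_sub_one_of_lt (Finset.mem_range.1 hi)
  have hlt : (minpoly M v).natDegree < p :=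
    (Polynomial.natDegree_le_of_dvd (minpoly.dvd M v hfv) hf.ne_zero).trans_lt hfdeg
  obtain ⟨m, -, hm⟩ := (Nat.dvd_prime_pow hp).1 (hD ▸ natDegree_minpoly_dvd_finrank (M := M) v)
  obtain rfl : m = 0 := by
    by_contra h
    exact (hm ▸ hlt).not_ge (Nat.le_self_pow h p)
  exact minpoly.natDegree_eq_one_iff.1 (hm.trans (pow_zero p))

end Minpoly

section CyclicAlgebra

variable {M C D : Type*} [Field M] [Field C] [DivisionRing D] [Algebra M C] [Algebra M D]
  {i : C →ₐ[M] D} {u : D}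

theorem exists_algEquiv_mul_eq [FiniteDimensional M D] (hu : u ≠ 0)
    (h : ∀ c, ∃ c', u * i c = i c' * u) :
    ∃ τ : C ≃ₐ[M] C, ∀ c, u * i c = i (τ c) * u := by
  choose t ht using h
  have hcancel {a b : C} (hab : i a * u = i b * u) : a = b :=
    i.injective (mul_right_cancel₀ hu hab)
  let τ : C →ₐ[M] C :=
    { toFun := t
      map_one' := hcancel (by rw [← ht, map_one, mul_one, one_mul])
      map_mul' := fun a b ↦ hcancel (by
        rw [← ht, map_mul, map_mul, ← mul_assoc, ht, mul_assoc, ht, mul_assoc])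
      map_zero' := hcancel (by rw [← ht, map_zero, mul_zero, zero_mul])
      map_add' := fun a b ↦ hcancel (by rw [← ht, map_add, map_add, mul_add, add_mul, ht, ht])
      commutes' := fun r ↦ hcancel (by rw [← ht, AlgHom.commutes, Algebra.commutes]) }
  have : FiniteDimensional M C := .of_injective i.toLinearMap i.injective
  exact ⟨.ofBijective τ (Algebra.IsAlgebraic.algHom_bijective τ), ht⟩

theorem eq_one_of_cyclicNorm_eq_pow [FiniteDimensional M D] {p k : ℕ} [Fact p.Prime]
    (hD : Module.finrank M D = p ^ k) {τ : C ≃ₐ[M] C} (hτ : ∀ c, u * i c = i (τ c) * u)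
    (hu : u ≠ 0) {y : C} (hy : i (cyclicNorm τ p y) = u ^ p) : τ = 1 := by
  have hp : p.Prime := Fact.out
  have hy₀ : i y ≠ 0 := by
    rw [Ne, map_eq_zero]
    rintro rfl
    rw [cyclicNorm_map_zero τ hp.ne_zero, map_zero] at hy
    exact pow_ne_zero p hu hy.symm
  obtain ⟨v, rfl⟩ : ∃ v, u = i y * v := ⟨(i y)⁻¹ * u, (mul_inv_cancel_left₀ hy₀ u).symm⟩
  have hv₀ : v ≠ 0 := right_ne_zero_of_mul hu
  have hτv (c : C) : v * i c = i (τ c) * v := by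
    refine mul_left_cancel₀ hy₀ ?_
    rw [← mul_assoc, hτ, ← mul_assoc, ← mul_assoc, ← map_mul, mul_comm, map_mul]
  have hvp : v ^ p = 1 := by
    have hpow := map_mul_pow_eq_map_cyclicNorm_mul (i := (i : C →+* D)) hτv p y
    simp only [AlgHom.coe_toRingHom] at hpow
    rw [hy] at hpow
    exact (mul_eq_left₀ (pow_ne_zero p hu)).1 hpow.symm
  obtain ⟨r, rfl⟩ := mem_bot_of_pow_eq_one hD hvp
  exact AlgEquiv.ext fun c ↦ i.injective <|
    mul_right_cancel₀ hv₀ ((hτv c).symm.trans (Algebra.commutes r (i c)))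

end CyclicAlgebra

end DivisionAlgebras

section Centralizer

variable {M L C D : Type*} [Field M] [Field L] [Field C] [DivisionRing D] [Algebra M L]
  [Algebra M C] [Algebra M D] [FiniteDimensional M D] [FiniteDimensional M L] [IsGalois M L]

theorem exists_orderOf_eq_and_mul_eq {p : ℕ} [Fact p.Prime] (hL : Module.finrank M L = p)
    {j : L →ₐ[M] D} {i : C →ₐ[M] D} (hi : ∀ x, (∃ c, i c = x) ↔ ∀ l, x * j l = j l * x) {l : L}
    {x : D} (hlx : x * j l ≠ j l * x) :
    ∃ (u : D) (τ : C ≃ₐ[M] C) (w : C), u ≠ 0 ∧ orderOf τ = p ∧ (∀ c, u * i c = i (τ c) * u) ∧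
      i w = u ^ p := by
  obtain ⟨u, g, hu, hg, huj⟩ := exists_ne_one_mul_eq_apply_mul j hlx
  have hgp : g ^ p = 1 := by
    rw [← hL, ← IsGalois.card_aut_eq_finrank M L, pow_card_eq_one']
  have hij (c : C) : ∀ l, i c * j l = j l * i c := (hi _).1 ⟨c, rfl⟩
  have hconj (c : C) : ∃ c', u * i c = i c' * u := by
    obtain ⟨c', hc'⟩ := (hi (u * i c * u⁻¹)).2 fun l ↦ by
      obtain ⟨l, rfl⟩ := g.surjective l
      have huj' : u⁻¹ * j (g l) = j l * u⁻¹ := by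
        rw [eq_mul_inv_iff_mul_eq₀ hu, mul_assoc, ← huj, inv_mul_cancel_left₀ hu]
      rw [mul_assoc, huj', ← mul_assoc, mul_assoc u, hij, ← mul_assoc, huj]
      simp only [mul_assoc]
    exact ⟨c', by rw [hc', inv_mul_cancel_right₀ hu]⟩
  obtain ⟨τ, hτ⟩ := exists_algEquiv_mul_eq hu hconj
  obtain ⟨w, hw⟩ := (hi (u ^ p)).2 fun l ↦ by
    have h := pow_mul_eq_map_pow_apply_mul (i := (j : L →+* D)) huj p l
    rwa [hgp] at h
  refine ⟨u, τ, w, hu, orderOf_eq_prime (AlgEquiv.ext fun c ↦ i.injective ?_) ?_, hτ, hw⟩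
  · have h := pow_mul_eq_map_pow_apply_mul (i := (i : C →+* D)) hτ p c
    rw [AlgHom.coe_toRingHom, ← hw, ← map_mul, mul_comm, map_mul] at h
    exact (mul_right_cancel₀ (by rw [hw]; exact pow_ne_zero p hu) h).symm
  · rintro rfl
    refine hg (AlgEquiv.ext fun l ↦ j.injective (mul_right_cancel₀ hu ?_))
    obtain ⟨c, hc⟩ := (hi (j l)).2 fun l' ↦ by rw [← map_mul, mul_comm, map_mul]
    have h := hτ c
    rw [hc, huj, AlgEquiv.one_apply, hc] at h
    exact h

end Centralizer

section Commutativity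

variable {p : ℕ} [Fact p.Prime]

theorem CyclicNormsSurjective.mul_eq_mul_of_centralizer {M C D : Type u} {L : Type*} [Field M]
    [Field L] [Field C] [DivisionRing D] [Algebra M L] [Algebra M C] [Algebra M D]
    [FiniteDimensional M D] [FiniteDimensional M L] [IsGalois M L] (h : CyclicNormsSurjective M p)
    {k : ℕ} (hD : Module.finrank M D = p ^ k) (hL : Module.finrank M L = p) {j : L →ₐ[M] D}
    {i : C →ₐ[M] D} (hi : ∀ x, (∃ c, i c = x) ↔ ∀ l, x * j l = j l * x) (x : D) (l : L) :
    x * j l = j l * x := by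
  by_contra hlx
  obtain ⟨u, τ, w, hu, hord, hτ, hw⟩ := exists_orderOf_eq_and_mul_eq hL hi hlx
  have hw₀ : w ≠ 0 := by
    rintro rfl
    exact pow_ne_zero p hu (hw.symm.trans (map_zero i))
  have hτw : τ w = w := i.injective <| mul_right_cancel₀ hu <| by
    change i (τ w) * u = i w * u
    rw [← hτ, hw, ← pow_succ, ← pow_succ']
  have : FiniteDimensional M C := .of_injective i.toLinearMap i.injective
  obtain ⟨y, hy⟩ := h C τ hord w hw₀ hτw
  have hτ₁ : τ = 1 := eq_one_of_cyclicNorm_eq_pow hD hτ hu (by rw [hy, hw])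
  rw [hτ₁, orderOf_one] at hord
  exact (Fact.out : p.Prime).one_lt.ne hord

theorem exists_lt_finrank_eq_pow_of_ne_top {M D : Type*} [Field M] [DivisionRing D] [Algebra M D]
    [FiniteDimensional M D] {k : ℕ} (hD : Module.finrank M D = p ^ k) {C : Subalgebra M D}
    (hC : C ≠ ⊤) : ∃ m < k, Module.finrank M C = p ^ m := by
  have hp : p.Prime := Fact.out
  let : DivisionRing C := divisionRingOfFiniteDimensional M C
  have hdvd : Module.finrank M C ∣ Module.finrank M D := finrank_dvd_of_algHom_module C.val
  obtain ⟨m, hmk, hm⟩ := (Nat.dvd_prime_pow hp).1 (hD ▸ hdvd)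
  refine ⟨m, lt_of_le_of_ne hmk ?_, hm⟩
  rintro rfl
  exact hC (Algebra.toSubmodule_eq_top.1
    (Submodule.eq_top_of_finrank_eq (C.finrank_toSubmodule.trans (hm.trans hD.symm))))

theorem CyclicNormsSurjective.mul_eq_mul_of_forall_subalgebra {M D : Type u} {L : Type*} [Field M]
    [Field L] [DivisionRing D] [Algebra M L] [Algebra M D] [FiniteDimensional M D]
    [FiniteDimensional M L] [IsGalois M L] (h : CyclicNormsSurjective M p) {k : ℕ}
    (hD : Module.finrank M D = p ^ k) (hL : Module.finrank M L = p)
    (hcomm : ∀ C : Subalgebra M D, C ≠ ⊤ → ∀ x y : C, x * y = y * x) (j : L →ₐ[M] D) (x : D)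
    (l : L) : x * j l = j l * x := by
  let C := Subalgebra.centralizer M (Set.range j)
  have hC (x : D) : x ∈ C ↔ ∀ l, x * j l = j l * x := by
    simp only [C, Subalgebra.mem_centralizer_iff, Set.forall_mem_range, eq_comm]
  by_cases htop : C = ⊤
  · exact (hC x).1 (htop ▸ trivial) l
  let : Field C := { divisionRingOfFiniteDimensional M C with mul_comm := hcomm C htop }
  exact h.mul_eq_mul_of_centralizer hD hL (i := C.val)
    (fun x ↦ by rw [← hC]; exact ⟨fun ⟨c, hc⟩ ↦ hc ▸ c.2, fun hx ↦ ⟨⟨x, hx⟩, rfl⟩⟩) x l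

end Commutativity

section PGroup

variable {p : ℕ} [Fact p.Prime]

theorem exists_normal_index_eq_prime_le {G : Type*} [Group G] [Finite G] (hG : IsPGroup p G)
    {H : Subgroup G} (hH : H ≠ ⊤) : ∃ K : Subgroup G, K.Normal ∧ K.index = p ∧ H ≤ K := by
  have hp : p.Prime := Fact.out
  obtain ⟨m, hm⟩ := IsPGroup.iff_card.1 hG
  obtain ⟨n, hn⟩ := IsPGroup.iff_card.1 (hG.to_subgroup H)
  have hlt : n < m := by
    rw [← Nat.pow_lt_pow_iff_right hp.one_lt, ← hn, ← hm]
    exact lt_of_le_of_ne (Subgroup.card_le_card_group H) (mt (Subgroup.card_eq_iff_eq_top H).1 hH)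
  obtain ⟨m, rfl⟩ := Nat.exists_eq_add_one_of_ne_zero hlt.ne_bot
  obtain ⟨K, hK, hle⟩ := Sylow.exists_subgroup_card_pow_prime_le p (m := m)
    (hm ▸ pow_dvd_pow p m.le_succ) H hn (Nat.le_of_lt_succ hlt)
  have hidx : K.index = p := by
    have hmul := K.card_mul_index
    rw [hK, hm, pow_succ] at hmul
    exact Nat.eq_of_mul_eq_mul_left (pow_pos hp.pos m) hmul
  refine ⟨K, Subgroup.normal_of_index_eq_minFac_card ?_, hidx, hle⟩
  rw [hidx, hm, Nat.pow_minFac m.succ_ne_zero, hp.minFac_eq]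

variable {M N : Type*} [Field M] [Field N] [Algebra M N] [FiniteDimensional M N] [IsGalois M N]

theorem exists_isGalois_finrank_eq_prime_le (hG : IsPGroup p (N ≃ₐ[M] N))
    {B : IntermediateField M N} (hB : B ≠ ⊥) :
    ∃ L ≤ B, IsGalois M L ∧ Module.finrank M L = p := by
  have htop : B.fixingSubgroup ≠ ⊤ := fun h ↦ hB <| by
    rw [← IsGalois.fixedField_fixingSubgroup B, h, IsGalois.fixedField_top]
  obtain ⟨K, _, hidx, hle⟩ := exists_normal_index_eq_prime_le hG htop
  refine ⟨IntermediateField.fixedField K, ?_, inferInstance, ?_⟩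
  · rw [← IsGalois.fixedField_fixingSubgroup B]
    exact IntermediateField.fixedField_le hle
  · rw [IntermediateField.finrank_eq_fixingSubgroup_index,
      IntermediateField.fixingSubgroup_fixedField, hidx]

variable (M N p) in
theorem exists_coprime_finrank_and_isPGroup :
    ∃ B : IntermediateField M N, p.Coprime (Module.finrank M B) ∧ IsPGroup p (N ≃ₐ[B] N) := by
  obtain ⟨P⟩ : Nonempty (Sylow p (N ≃ₐ[M] N)) := inferInstance
  refine ⟨IntermediateField.fixedField (P : Subgroup (N ≃ₐ[M] N)), ?_,
    P.isPGroup'.of_equiv (IntermediateField.subgroupEquivAlgEquiv (P : Subgroup (N ≃ₐ[M] N)))⟩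
  rw [IntermediateField.finrank_eq_fixingSubgroup_index,
    IntermediateField.fixingSubgroup_fixedField]
  exact ((Fact.out : p.Prime).coprime_iff_not_dvd).2 P.not_dvd_index

theorem exists_isGalois_finrank_eq_prime_algHom {D : Type*} [Ring D] [IsDomain D] [Algebra M D]
    [FiniteDimensional M D] (hG : IsPGroup p (N ≃ₐ[M] N)) {a : D} (ha : a ∉ (⊥ : Subalgebra M D))
    (hs : ((minpoly M a).map (algebraMap M N)).Splits) :
    ∃ L : IntermediateField M N, IsGalois M L ∧ Module.finrank M L = p ∧
      Nonempty (L →ₐ[M] D) := by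
  have hai : IsIntegral M a := Algebra.IsIntegral.isIntegral a
  have hirr : Irreducible (minpoly M a) := minpoly.irreducible hai
  obtain ⟨b, hb⟩ := hs.exists_eval_eq_zero
    (by rw [Polynomial.degree_map]; exact (Polynomial.degree_pos_of_irreducible hirr).ne')
  rw [Polynomial.eval_map_algebraMap] at hb
  have hbi : IsIntegral M b := Algebra.IsIntegral.isIntegral b
  have hab : minpoly M a = minpoly M b :=
    minpoly.eq_of_irreducible_of_monic hirr hb (minpoly.monic hai)
  have hbot : IntermediateField.adjoin M {b} ≠ ⊥ := by
    refine fun h ↦ ha (minpoly.natDegree_eq_one_iff.1 ?_)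
    rw [hab, ← IntermediateField.adjoin.finrank hbi, h, IntermediateField.finrank_bot]
  obtain ⟨L, hLb, hL, hrank⟩ := exists_isGalois_finrank_eq_prime_le hG hbot
  let e : AdjoinRoot (minpoly M a) ≃ₐ[M] IntermediateField.adjoin M {b} :=
    hab ▸ IntermediateField.adjoinRootEquivAdjoin M hbi
  exact ⟨L, hL, hrank, ⟨((adjoinRootMinpolyAlgHom a).comp (e.symm : _ →ₐ[M] _)).comp
    (IntermediateField.inclusion hLb)⟩⟩

end PGroup

section BaseChange

open scoped TensorProduct

-- The dimension of a nonzero left ideal is divisible by both `finrank F M` and `finrank F D`, so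
-- the algebra has no proper left ideals.
theorem isUnit_of_coprime_finrank {F M D A : Type*} [Field F] [DivisionRing M] [DivisionRing D]
    [Ring A] [Algebra F M] [Algebra F D] [Algebra F A] [FiniteDimensional F A] (f : M →ₐ[F] A)
    (g : D →ₐ[F] A) (hcop : (Module.finrank F M).Coprime (Module.finrank F D))
    (hA : Module.finrank F A = Module.finrank F M * Module.finrank F D) {x : A} (hx : x ≠ 0) :
    IsUnit x := by
  have : Nontrivial A := ⟨x, 0, hx⟩
  have htop (I : Submodule A A) (hI : I ≠ ⊥) : I = ⊤ := by
    have hpos : 0 < Module.finrank F I := by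
      have : FiniteDimensional F I := inferInstanceAs (FiniteDimensional F (I.restrictScalars F))
      have : Nontrivial I := Submodule.nontrivial_iff_ne_bot.2 hI
      exact Module.finrank_pos
    have hdvd : Module.finrank F A ∣ Module.finrank F I := hA ▸ hcop.mul_dvd_of_dvd_of_dvd
      (finrank_dvd_of_algHom_module f) (finrank_dvd_of_algHom_module g)
    rw [← Submodule.restrictScalars_eq_top_iff F]
    exact Submodule.eq_top_of_finrank_eq <|
      (Submodule.finrank_le _).antisymm (Nat.le_of_dvd hpos hdvd)
  have hsimple : IsSimpleModule A A :=
    (isSimpleModule_iff A A).2 ⟨fun I ↦ or_iff_not_imp_left.2 (htop I)⟩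
  exact (isSimpleModule_self_iff_isUnit.1 hsimple).2 x hx

variable {F M D : Type*} [Field F] [Field M] [Algebra F M] [Ring D] [Algebra F D]

theorem isCentral_tensorProduct [Algebra.IsCentral F D] :
    Algebra.IsCentral M (M ⊗[F] D) := by
  refine ⟨fun z hz ↦ ?_⟩
  have hz' : z ∈ Subalgebra.centralizer F
      ((Algebra.TensorProduct.includeRight : D →ₐ[F] M ⊗[F] D).range : Set (M ⊗[F] D)) :=
    Subalgebra.mem_centralizer_iff F |>.2 fun g _ ↦ Subalgebra.mem_center_iff.1 hz g
  rw [Subalgebra.centralizer_range_includeRight_eq_center_tensorProduct] at hz'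
  obtain ⟨w, rfl⟩ := hz'
  clear hz
  induction w with
  | zero => simp only [map_zero, zero_mem]
  | add a b ha hb => simpa only [map_add] using add_mem ha hb
  | tmul m d =>
    obtain ⟨d, hd⟩ := d
    obtain ⟨r, rfl⟩ := Algebra.IsCentral.out hd
    refine ⟨m * algebraMap F M r, ?_⟩
    change (m * algebraMap F M r) ⊗ₜ[F] (1 : D) = m ⊗ₜ[F] (algebraMap F D r)
    rw [Algebra.algebraMap_eq_smul_one, Algebra.algebraMap_eq_smul_one, mul_smul_comm, mul_one,
      TensorProduct.smul_tmul]

theorem one_tmul_notMem_bot [Algebra.IsCentral F D] {a : D} (ha : a ∉ (⊥ : Subalgebra F D)) :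
    (1 : M) ⊗ₜ[F] a ∉ (⊥ : Subalgebra M (M ⊗[F] D)) := by
  rintro ⟨m, hm⟩
  refine ha (Algebra.IsCentral.out (Subalgebra.mem_center_iff.2 fun b ↦ ?_))
  have hinj : Function.Injective (Algebra.TensorProduct.includeRight : D →ₐ[F] M ⊗[F] D) :=
    Algebra.TensorProduct.includeRight_injective (algebraMap F M).injective
  refine hinj ?_
  have hcomm := Algebra.commutes m ((1 : M) ⊗ₜ[F] b)
  rw [map_mul, map_mul]
  exact (hm ▸ hcomm).symm

theorem minpoly_one_tmul_dvd (a : D) :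
    minpoly M ((1 : M) ⊗ₜ[F] a) ∣ (minpoly F a).map (algebraMap F M) := by
  refine minpoly.dvd M _ ?_
  rw [Polynomial.aeval_map_algebraMap]
  change Polynomial.aeval ((Algebra.TensorProduct.includeRight : D →ₐ[F] M ⊗[F] D) a) _ = 0
  rw [Polynomial.aeval_algHom_apply, minpoly.aeval, map_zero]

end BaseChange

section Main

open scoped TensorProduct

variable {p : ℕ} [Fact p.Prime]

theorem bot_ne_top_of_mul_ne_mul {F D : Type*} [CommSemiring F] [Semiring D] [Algebra F D]
    {x y : D} (hxy : x * y ≠ y * x) : (⊥ : Subalgebra F D) ≠ ⊤ := by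
  intro h
  obtain ⟨r, rfl⟩ : x ∈ (⊥ : Subalgebra F D) := h ▸ trivial
  exact hxy (Algebra.commutes r y)

theorem exists_mul_ne_mul_of_finrank_ne_one {M L D : Type*} [Field M] [Field L] [Ring D]
    [Nontrivial D] [Algebra M L] [Algebra M D] [Algebra.IsCentral M D]
    (hL : Module.finrank M L ≠ 1) (j : L →ₐ[M] D) : ∃ (x : D) (l : L), x * j l ≠ j l * x := by
  by_contra! h
  have hbot : j.range = ⊥ := by
    refine le_bot_iff.1 ?_
    rintro _ ⟨l, rfl⟩
    exact Algebra.IsCentral.out (Subalgebra.mem_center_iff.2 fun x ↦ h x l)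
  apply hL
  rw [(AlgEquiv.ofInjective j j.injective).toLinearEquiv.finrank_eq, hbot, Subalgebra.finrank_bot]

theorem CyclicNormsSurjective.mul_comm_of_isCentral {F D : Type u} [Field F] [DivisionRing D]
    [Algebra F D] [FiniteDimensional F D] [Algebra.IsCentral F D] (h : CyclicNormsSurjective F p)
    {k : ℕ} (hD : Module.finrank F D = p ^ k)
    (ih : ∀ m < k, ∀ (M C : Type u) [Field M] [DivisionRing C] [Algebra M C]
      [FiniteDimensional M C], CyclicNormsSurjective M p → Module.finrank M C = p ^ m →
        ∀ x y : C, x * y = y * x) (x y : D) : x * y = y * x := by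
  by_contra hxy
  obtain ⟨a, ha, hsep⟩ := JacobsonNoether.exists_separable_and_not_isCentral'
    (bot_ne_top_of_mul_ne_mul (F := F) hxy)
  let N := (minpoly F a).SplittingField
  have : IsGalois F N := IsGalois.of_separable_splitting_field (p := minpoly F a) hsep
  obtain ⟨M, hM, hG⟩ := exists_coprime_finrank_and_isPGroup p F N
  let : DivisionRing (M ⊗[F] D) := .ofIsUnitOrEqZero fun x ↦ or_iff_not_imp_right.2 <|
    isUnit_of_coprime_finrank Algebra.TensorProduct.includeLeft Algebra.TensorProduct.includeRight
      (hD ▸ (hM.pow_left k).symm) Module.finrank_tensorProduct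
  have hD' : Module.finrank M (M ⊗[F] D) = p ^ k := Module.finrank_baseChange.trans hD
  have hN : CyclicNormsSurjective M p := h.trans M
  have hcomm (C : Subalgebra M (M ⊗[F] D)) (hC : C ≠ ⊤) (x y : C) : x * y = y * x := by
    obtain ⟨m, hmk, hm⟩ := exists_lt_finrank_eq_pow_of_ne_top hD' hC
    let : DivisionRing C := divisionRingOfFiniteDimensional M C
    exact ih m hmk M C hN hm x y
  have hsplits : ((minpoly M ((1 : M) ⊗ₜ[F] a)).map (algebraMap M N)).Splits := by
    refine (Polynomial.SplittingField.splits (minpoly F a)).of_dvd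
      (Polynomial.map_ne_zero (minpoly.ne_zero (Algebra.IsIntegral.isIntegral a))) ?_
    rw [IsScalarTower.algebraMap_eq F M N, ← Polynomial.map_map]
    exact Polynomial.map_dvd _ (minpoly_one_tmul_dvd a)
  obtain ⟨L, _, hL, ⟨j⟩⟩ :=
    exists_isGalois_finrank_eq_prime_algHom hG (one_tmul_notMem_bot ha) hsplits
  have := isCentral_tensorProduct (F := F) (M := M) (D := D)
  obtain ⟨x, l, hxl⟩ :=
    exists_mul_ne_mul_of_finrank_ne_one (hL.trans_ne (Fact.out : p.Prime).ne_one) j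
  exact hxl (hN.mul_eq_mul_of_forall_subalgebra hD' hL hcomm j x l)

theorem CyclicNormsSurjective.mul_comm {k : ℕ} {F D : Type u} [Field F] [DivisionRing D]
    [Algebra F D] [FiniteDimensional F D] (h : CyclicNormsSurjective F p)
    (hD : Module.finrank F D = p ^ k) (x y : D) : x * y = y * x := by
  induction k using Nat.strong_induction_on generalizing F D with
  | _ k ih =>
  let Z := Subring.center D
  let : Algebra F Z := ((algebraMap F D).codRestrict Z fun r ↦
    Subring.mem_center_iff.2 fun y ↦ (Algebra.commutes r y).symm).toAlgebra
  have : IsScalarTower F Z D := .of_algebraMap_eq fun _ ↦ rfl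
  have : FiniteDimensional F Z := .left F Z D
  have : FiniteDimensional Z D := .right F Z D
  have : Algebra.IsCentral Z D := ⟨fun z hz ↦
    ⟨⟨z, Subring.mem_center_iff.2 (Subalgebra.mem_center_iff.1 hz)⟩, rfl⟩⟩
  obtain ⟨m, hmk, hm⟩ := (Nat.dvd_prime_pow Fact.out).1
    (hD ▸ Module.finrank_mul_finrank F Z D ▸ dvd_mul_left _ _ : Module.finrank Z D ∣ p ^ k)
  exact (h.trans Z).mul_comm_of_isCentral hm
    (fun n hn M C _ _ _ _ hM hC x y ↦ ih n (hn.trans_le hmk) hM hC x y) x y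

theorem CyclicNormsSurjective.brauerPComponentTrivial {F : Type u} [Field F]
    (h : CyclicNormsSurjective F p) : BrauerPComponentTrivial F p := by
  intro D _ _ _ _ ⟨k, hk⟩
  have htop : (⊥ : Subalgebra F D) = ⊤ := top_unique fun x _ ↦
    Algebra.IsCentral.out (Subalgebra.mem_center_iff.2 fun y ↦ h.mul_comm hk y x)
  exact Subalgebra.bot_eq_top_iff_finrank_eq_one.1 htop

end Main

theorem stmt_19 {E : Type u} [Field E] (p : ℕ) (hp : p.Prime)
    (F : Type u) [Field F] [Algebra E F] (hFalg : Algebra.IsAlgebraic E F)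
    (hBr : ¬ BrauerPComponentTrivial F p) :
    ∃ F₁ : IntermediateField E (AlgebraicClosure E),
      ∃ F₂ : IntermediateField F₁ (AlgebraicClosure E),
        FiniteDimensional E F₁ ∧ Algebra.IsSeparable E F₁ ∧
        Module.finrank F₁ F₂ = p ∧ IsGalois F₁ F₂ ∧ IsCyclic (F₂ ≃ₐ[F₁] F₂) ∧
        normGroup F₁ F₂ ≠ ⊤ := by
  have : Fact p.Prime := ⟨hp⟩
  by_contra hcon
  have hnorm : CyclicNormsSurjectiveOnPowSeparable E p 1 :=
    cyclicNormsSurjectiveOnPowSeparable_one fun L _ _ _ _ K _ hK ↦ by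
      by_contra hN
      exact hcon (exists_cyclic_normGroup_ne_top_of_normGroup_ne_top K hK hN)
  exact hBr (hnorm.cyclicNormsSurjective.trans F).brauerPComponentTrivial
end
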